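/- arXiv:2502.12773 — 2 statements merged into one kernel-verified Lean document; each statement's English description precedes it below -/
import Mathlib

section
/- Let G be a connected bridgeless finite simple graph with n vertices and m edges, and write its flow polynomial as F(G,t) = Σ_{i=0}^{m−n+1} c_i t^i. Then for every i with 0 ≤ i ≤ m−n+1 one has |c_i| ≤ d_i, where the d_i are defined by Σ_{i=0}^{m−n+1} d_i t^i = ∏_{j=1}^{m−n+1} (t+j) if n ≤ m ≤ n+3, and Σ_{i=0}^{m−n+1} d_i t^i = (t+1)(t+2)(t+3)^2(t+4)^{m−n−3} if m ≥ n+4. -/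
open Polynomial

/-- The flow polynomial of a finite simple graph `G`:
`F(G,t) = Σ_{Z ⊆ E(G)} (−1)^{m−|Z|} t^{|Z|+c(Z)−n}`, where `c(Z)` is the number of
connected components of the spanning subgraph with edge set `Z`. -/
noncomputable def flowPoly {V : Type} [Fintype V] (G : SimpleGraph V) : Polynomial ℤ :=
  ∑ Z ∈ G.edgeSet.toFinite.toFinset.powerset,
    (-1 : ℤ) ^ (G.edgeSet.toFinite.toFinset.card - Z.card) •
      (X : Polynomial ℤ) ^
        (Z.card + Nat.card (SimpleGraph.fromEdgeSet (↑Z : Set (Sym2 V))).ConnectedComponent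
          - Fintype.card V)

/-- The number of edges of `G`. -/
noncomputable def edgeCount {V : Type} [Fintype V] (G : SimpleGraph V) : ℕ :=
  G.edgeSet.toFinite.toFinset.card

/-!
The columns of the incidence matrix over the field with two elements turn the flow polynomial of a
multigraph into that of a vector configuration, for which deletion–contraction is linear algebra;
it shows that, up to the substitution `t ↦ -t` and a sign, all coefficients are nonnegative, so that
they can be compared coefficientwise.

The bound is proved for all multigraphs, by deletion–contraction at a root vertex, and depends on
the cycle rank `g` and the degree `D` of the root. Loops and vertices of degree at most two reduce
to smaller multigraphs. Otherwise, either the root lies on a pair of parallel edges, or it has `D`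
neighbours and counting degrees gives `D ≤ g`. In the first case contracting one of the parallel
edges turns the other into a loop, and in the second contraction raises the degree of the root, so
the bounds need only satisfy two recursions in `g` and `D`. The recursions are solved by an array
whose diagonal grows by a factor of at most `t + 4` at each step.
-/

section Staircase

variable {R : Type*} [CommRing R] (t : R)

/-- The staircase array: each entry off the two axes is the sum of its neighbours to the left and
below, except that a row is constant to the right of the diagonal. These recursions are what
deletion–contraction at a root vertex of a multigraph needs from an upper bound. -/
def staircase : ℕ → ℕ → R
  | 0, _ => 1
  | h + 1, 0 => (t + 2) ^ (h + 1)
  | h + 1, j + 1 => staircase (h + 1) j + if j ≤ h then staircase h (j + 1) else 0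

/-- The bound for the flow polynomial, in the variable `t`, of a multigraph of cycle rank `g`
in terms of the degree `d` of a root vertex. The subtraction is truncated: no use is made of
degrees beyond `g + 1`. -/
def rootedBound : ℕ → ℕ → R
  | 0, _ => 1
  | 1, _ => t + 1
  | g + 2, d => (t + 1) * (t + 2) * staircase t g (g + 3 - d)

/-- The polynomial `∑ dᵢ tⁱ` of the theorem as a function of the cycle rank `g = m - n + 1`. -/
def flowBound (g : ℕ) : R :=
  if g ≤ 4 then ∏ j ∈ Finset.Icc 1 g, (t + j)
  else (t + 1) * (t + 2) * (t + 3) ^ 2 * (t + 4) ^ (g - 4)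

theorem staircase_zero_left (j : ℕ) : staircase t 0 j = 1 := by
  rw [staircase]

theorem staircase_zero_right (h : ℕ) : staircase t h 0 = (t + 2) ^ h := by
  cases h <;> simp [staircase]

variable {t}

theorem staircase_succ_succ {h j : ℕ} (hj : j ≤ h) :
    staircase t (h + 1) (j + 1) = staircase t (h + 1) j + staircase t h (j + 1) := by
  rw [staircase, if_pos hj]

theorem staircase_succ_right {h j : ℕ} (hj : h ≤ j) :
    staircase t h (j + 1) = staircase t h j := by
  cases h with
  | zero => simp only [staircase_zero_left]
  | succ h => rw [staircase, if_neg (by omega), add_zero]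

theorem staircase_of_le {h j : ℕ} (hj : h ≤ j) : staircase t h j = staircase t h h := by
  induction j, hj using Nat.le_induction with
  | base => rfl
  | succ j hj ih => rw [staircase_succ_right hj, ih]

theorem staircase_succ_zero_eq (h : ℕ) :
    staircase t (h + 1) 0 = (t + 1) * staircase t h 1 + 1 := by
  induction h with
  | zero => rw [staircase_zero_right, staircase_zero_left]; ring
  | succ h ih =>
    rw [staircase_succ_succ h.zero_le]
    simp only [staircase_zero_right] at ih ⊢
    linear_combination ih

theorem rootedBound_of_le_three (g : ℕ) {d : ℕ} (hd : d ≤ 3) :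
    rootedBound t g d = rootedBound t g 0 := by
  match g with
  | 0 | 1 => rfl
  | g + 2 =>
    simp only [rootedBound]
    rw [staircase_of_le (by omega), staircase_of_le (j := g + 3 - 0) (by omega)]

variable [PartialOrder R] [IsOrderedRing R] (ht : 0 ≤ t)
include ht

theorem add_ofNat_nonneg (n : ℕ) [n.AtLeastTwo] : 0 ≤ t + OfNat.ofNat n :=
  add_nonneg ht (Nat.ofNat_nonneg n)

theorem staircase_nonneg (h j : ℕ) : 0 ≤ staircase t h j := by
  fun_induction staircase t h j with
  | case1 => exact zero_le_one
  | case2 => exact pow_nonneg (add_ofNat_nonneg ht 2) _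
  | case3 h j ih₁ ih₂ => split_ifs <;> positivity

theorem staircase_monotone (h : ℕ) : Monotone (staircase t h) := by
  refine monotone_nat_of_le_succ fun j => ?_
  rcases le_or_gt h j with hj | hj
  · exact (staircase_succ_right hj).ge
  · obtain ⟨h, rfl⟩ := Nat.exists_eq_succ_of_ne_zero (Nat.ne_zero_of_lt hj)
    rw [staircase_succ_succ (by omega)]
    exact le_add_of_nonneg_right (staircase_nonneg ht _ _)

theorem add_two_mul_staircase_le (h j : ℕ) :
    (t + 2) * staircase t h j ≤ staircase t (h + 1) j := by
  induction h generalizing j with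
  | zero =>
    have hmono := staircase_monotone ht 1 j.zero_le
    rw [staircase_zero_right] at hmono
    simpa [staircase_zero_left] using hmono
  | succ h ih =>
    induction j with
    | zero => simp only [staircase_zero_right]; exact le_of_eq (by ring)
    | succ j ihj =>
      rcases lt_trichotomy j (h + 1) with hj | rfl | hj
      · have hlow := staircase_succ_succ (t := t) (h := h) (j := j) (by omega)
        rw [staircase_succ_succ (h := h + 1) (by omega)]
        linear_combination ihj + ih (j + 1) + (t + 2) * hlow
      · rw [staircase_succ_succ le_rfl, staircase_succ_right (h := h + 1) le_rfl]
        linear_combination ihj + staircase_nonneg ht (h + 1) (h + 1)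
      · rwa [staircase_succ_right (by omega), staircase_succ_right (by omega)]

theorem add_one_mul_staircase_succ_le (h j : ℕ) :
    (t + 1) * staircase t h (j + 1) ≤ staircase t (h + 1) j := by
  induction h generalizing j with
  | zero =>
    have hpar := add_two_mul_staircase_le ht 0 j
    rw [staircase_zero_left] at hpar ⊢
    linear_combination hpar + zero_le_one (α := R)
  | succ h ih =>
    induction j with
    | zero =>
      rw [staircase_succ_zero_eq (h + 1)]
      exact le_add_of_nonneg_right zero_le_one
    | succ j ihj =>
      rcases lt_or_ge j h with hj | hj
      · have hlow := staircase_succ_succ (t := t) (h := h) (j := j + 1) (by omega)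
        rw [staircase_succ_succ (h := h + 1) (by omega)]
        linear_combination ihj + ih (j + 1) + (t + 1) * hlow
      · rw [staircase_succ_right (h := h + 1) (by omega)]
        linear_combination add_two_mul_staircase_le ht (h + 1) (j + 1) +
          staircase_nonneg ht (h + 1) (j + 1)

theorem staircase_succ_succ_le {h j : ℕ} (hj : j ≤ h) :
    staircase t (h + 1) (j + 1) ≤ (t + 4) * staircase t h j := by
  induction h generalizing j with
  | zero =>
    obtain rfl : j = 0 := by omega
    simp only [staircase_succ_succ le_rfl, staircase_zero_right, staircase_zero_left]
    linear_combination zero_le_one (α := R)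
  | succ h ih =>
    induction j with
    | zero =>
      have hcol := ih h.zero_le
      rw [staircase_succ_succ (Nat.zero_le _)]
      simp only [staircase_zero_right] at hcol ⊢
      have hprod : 0 ≤ (t + 2) ^ h * t := mul_nonneg (pow_nonneg (add_ofNat_nonneg ht 2) h) ht
      linear_combination hcol + hprod
    | succ j ihj =>
      have hlow := staircase_succ_succ (t := t) (h := h) (j := j) (by omega)
      have hstep := staircase_succ_succ (t := t) hj
      rcases Nat.lt_or_ge j h with hjh | hjh
      · linear_combination hstep - (t + 4) * hlow + ihj (by omega) + ih hjh
      · obtain rfl : j = h := by omega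
        rw [staircase_succ_right le_rfl] at hlow hstep
        linear_combination hstep - (t + 4) * hlow + ihj (by omega) + ih le_rfl

theorem staircase_diagonal_le (k : ℕ) :
    staircase t (k + 3) (k + 3) ≤ (t + 3) ^ 2 * (t + 4) ^ (k + 1) := by
  induction k with
  | zero =>
    have hdiff : 0 ≤ t * (t + 4) + 1 :=
      add_nonneg (mul_nonneg ht (add_ofNat_nonneg ht 4)) zero_le_one
    norm_num [staircase]
    linear_combination hdiff
  | succ k ih =>
    calc staircase t (k + 4) (k + 4) ≤ (t + 4) * staircase t (k + 3) (k + 3) :=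
          staircase_succ_succ_le ht le_rfl
      _ ≤ (t + 4) * ((t + 3) ^ 2 * (t + 4) ^ (k + 1)) :=
          mul_le_mul_of_nonneg_left ih (add_ofNat_nonneg ht 4)
      _ = (t + 3) ^ 2 * (t + 4) ^ (k + 1 + 1) := by ring

theorem add_one_mul_add_two_nonneg : 0 ≤ (t + 1) * (t + 2) :=
  mul_nonneg (add_nonneg ht zero_le_one) (add_ofNat_nonneg ht 2)

theorem rootedBound_nonneg (g d : ℕ) : 0 ≤ rootedBound t g d := by
  match g with
  | 0 => exact zero_le_one
  | 1 => exact add_nonneg ht zero_le_one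
  | g + 2 => exact mul_nonneg (add_one_mul_add_two_nonneg ht) (staircase_nonneg ht _ _)

theorem rootedBound_antitone (g : ℕ) : Antitone (rootedBound t g) := by
  intro d d' hd
  match g with
  | 0 | 1 => exact le_rfl
  | g + 2 =>
    exact mul_le_mul_of_nonneg_left (staircase_monotone ht g (by omega))
      (add_one_mul_add_two_nonneg ht)

theorem add_one_mul_rootedBound_le (g : ℕ) {d d' : ℕ} (hd : d ≤ d' + 2) :
    (t + 1) * rootedBound t g d' ≤ rootedBound t (g + 1) d := by
  match g with
  | 0 => simp [rootedBound]
  | 1 =>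
    simp only [rootedBound, staircase_zero_left]
    linear_combination add_nonneg ht zero_le_one
  | g + 2 =>
    have hmono := staircase_monotone ht g (show g + 3 - d' ≤ g + 1 + 3 - d + 1 by omega)
    calc (t + 1) * ((t + 1) * (t + 2) * staircase t g (g + 3 - d'))
        = (t + 1) * (t + 2) * ((t + 1) * staircase t g (g + 3 - d')) := by ring
      _ ≤ (t + 1) * (t + 2) * staircase t (g + 1) (g + 1 + 3 - d) :=
          mul_le_mul_of_nonneg_left
            ((mul_le_mul_of_nonneg_left hmono (add_nonneg ht zero_le_one)).trans
              (add_one_mul_staircase_succ_le ht g _))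
            (add_one_mul_add_two_nonneg ht)

theorem add_two_mul_rootedBound_le (g : ℕ) {d d' : ℕ} (hd : d ≤ d' + 1) :
    (t + 2) * rootedBound t (g + 1) d' ≤ rootedBound t (g + 2) d := by
  match g with
  | 0 =>
    simp only [rootedBound, staircase_zero_left]
    exact le_of_eq (by ring)
  | g + 1 =>
    have hmono := staircase_monotone ht g (show g + 3 - d' ≤ g + 1 + 3 - d by omega)
    calc (t + 2) * ((t + 1) * (t + 2) * staircase t g (g + 3 - d'))
        = (t + 1) * (t + 2) * ((t + 2) * staircase t g (g + 3 - d')) := by ring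
      _ ≤ (t + 1) * (t + 2) * staircase t (g + 1) (g + 1 + 3 - d) :=
          mul_le_mul_of_nonneg_left
            ((mul_le_mul_of_nonneg_left hmono (add_ofNat_nonneg ht 2)).trans
              (add_two_mul_staircase_le ht g _))
            (add_one_mul_add_two_nonneg ht)

theorem rootedBound_add_rootedBound_le {g d d₁ d₂ : ℕ} (hd : 3 ≤ d) (hdg : d ≤ g + 1)
    (hd₁ : d ≤ d₁ + 1) (hd₂ : d + 1 ≤ d₂) :
    rootedBound t g d₁ + rootedBound t (g + 1) d₂ ≤ rootedBound t (g + 1) d := by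
  obtain ⟨g, rfl⟩ := Nat.exists_eq_add_of_le' (show 2 ≤ g by omega)
  obtain ⟨j, hj⟩ := Nat.exists_eq_add_of_le' (show 1 ≤ g + 1 + 3 - d by omega)
  have hmono₁ := staircase_monotone ht g (show g + 3 - d₁ ≤ j + 1 by omega)
  have hmono₂ := staircase_monotone ht (g + 1) (show g + 1 + 3 - d₂ ≤ j by omega)
  simp only [rootedBound]
  rw [hj, staircase_succ_succ (by omega), ← mul_add, add_comm (staircase t (g + 1) j)]
  exact mul_le_mul_of_nonneg_left (add_le_add hmono₁ hmono₂) (add_one_mul_add_two_nonneg ht)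

theorem rootedBound_zero_monotone : Monotone fun g => rootedBound t g 0 := by
  refine monotone_nat_of_le_succ fun g => ?_
  have hstep := add_one_mul_rootedBound_le ht g (d := 0) (d' := 0) (by omega)
  have hprod := mul_nonneg ht (rootedBound_nonneg ht g 0)
  linear_combination hstep + hprod

theorem rootedBound_zero_le_flowBound (g : ℕ) : rootedBound t g 0 ≤ flowBound t g := by
  match g with
  | 0 => simp [rootedBound, flowBound]
  | 1 => simp [rootedBound, flowBound]
  | 2 => norm_num [rootedBound, flowBound, staircase_zero_left, Finset.prod_Icc_succ_top]
  | 3 =>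
    norm_num [rootedBound, flowBound, staircase, Finset.prod_Icc_succ_top]
    exact le_of_eq (by ring)
  | 4 =>
    have hdiff := mul_nonneg (add_one_mul_add_two_nonneg ht) (add_ofNat_nonneg ht 2)
    norm_num [rootedBound, flowBound, staircase, Finset.prod_Icc_succ_top]
    linear_combination hdiff
  | k + 5 =>
    have hdiag := mul_le_mul_of_nonneg_left (staircase_diagonal_le ht k)
      (add_one_mul_add_two_nonneg ht)
    simpa [rootedBound, flowBound, staircase_of_le (show k + 3 ≤ k + 3 + 3 by omega), mul_assoc]
      using hdiag

end Staircase

/-- The coefficientwise order on polynomials, in which bounds on flow polynomials are stated. -/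
noncomputable local instance coeffwisePartialOrder {R : Type*} [Semiring R] [PartialOrder R] :
    PartialOrder R[X] :=
  PartialOrder.lift coeff coeff_injective

section CoeffwiseOrder

variable {R : Type*} [Semiring R] [PartialOrder R] [IsOrderedRing R]

theorem isOrderedRing_coeffwise : IsOrderedRing R[X] where
  add_le_add_left p q h r i := by
    simpa only [coeff_add] using add_le_add_left (h i) (r.coeff i)
  zero_le_one i := by
    rw [coeff_zero, coeff_one]
    split_ifs
    exacts [zero_le_one, le_rfl]
  mul_le_mul_of_nonneg_left p hp q r h i := by
    simp only [coeff_mul]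
    exact Finset.sum_le_sum fun x _ => mul_le_mul_of_nonneg_left (h x.2) (hp x.1)
  mul_le_mul_of_nonneg_right p hp q r h i := by
    simp only [coeff_mul]
    exact Finset.sum_le_sum fun x _ => mul_le_mul_of_nonneg_right (h x.1) (hp x.2)

theorem coeffwise_X_nonneg : (0 : R[X]) ≤ X := fun i => by
  rw [coeff_zero, coeff_X]
  split_ifs
  exacts [zero_le_one, le_rfl]

end CoeffwiseOrder

attribute [local instance] isOrderedRing_coeffwise

section VectorFlow

variable {K : Type*} [Field K] {M : Type*} [AddCommGroup M] [Module K M]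
  {N : Type*} [AddCommGroup N] [Module K N]

variable (K) in
/-- The rank of a finite configuration of vectors. -/
noncomputable def vectorRank (S : Multiset M) : ℕ :=
  Set.finrank K {v | v ∈ S}

variable (K) in
/-- The nullity of a finite configuration of vectors, that is, the dimension of its space of linear
relations; the subtraction does not truncate, by `vectorRank_le_card`. -/
noncomputable def vectorNullity (S : Multiset M) : ℕ :=
  Multiset.card S - vectorRank K S

variable (K) in
/-- The flow polynomial `F` of a finite configuration of vectors, normalized to
`(-1) ^ nullity * F(-t)` in order to have nonnegative coefficients. -/
noncomputable def vectorFlowPoly (S : Multiset M) : ℤ[X] :=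
  (S.powerset.map fun Z => (-1) ^ (vectorRank K S + vectorRank K Z) * X ^ vectorNullity K Z).sum

theorem powerset_multiset_map {α β : Type*} (f : α → β) (S : Multiset α) :
    (S.map f).powerset = S.powerset.map (Multiset.map f) := by
  induction S using Multiset.induction_on with
  | empty => simp
  | cons a S ih => simp [ih, Multiset.map_map]

theorem setOf_mem_cons {α : Type*} (a : α) (S : Multiset α) :
    {x | x ∈ a ::ₘ S} = insert a {x | x ∈ S} := by
  ext x
  simp

theorem finite_span_multiset (S : Multiset M) : Module.Finite K (Submodule.span K {v | v ∈ S}) :=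
  FiniteDimensional.span_of_finite K S.finite_toSet

theorem vectorRank_le_card (S : Multiset M) : vectorRank K S ≤ Multiset.card S := by
  classical
  have hset : {v | v ∈ S} = (S.toFinset : Set M) := by ext; simp
  rw [vectorRank, hset]
  exact (finrank_span_finset_le_card S.toFinset).trans S.toFinset_card_le

theorem vectorRank_cons_of_mem_span {v : M} {S : Multiset M}
    (hv : v ∈ Submodule.span K {x | x ∈ S}) : vectorRank K (v ::ₘ S) = vectorRank K S := by
  rw [vectorRank, setOf_mem_cons, Set.finrank, Submodule.span_insert_eq_span hv]
  rfl

theorem vectorRank_cons_eq_vectorRank_map {φ : M →ₗ[K] N} {v : M}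
    (hφ : LinearMap.ker φ = Submodule.span K {v}) (hv : v ≠ 0) (S : Multiset M) :
    vectorRank K (v ::ₘ S) = vectorRank K (S.map φ) + 1 := by
  set W := Submodule.span K {x | x ∈ v ::ₘ S} with hW
  have : Module.Finite K W := finite_span_multiset _
  have hφv : φ v = 0 := LinearMap.mem_ker.1 (hφ ▸ Submodule.mem_span_singleton_self v)
  have hker_le : LinearMap.ker φ ≤ W := by
    rw [hφ, Submodule.span_singleton_le_iff_mem]
    exact Submodule.subset_span (Multiset.mem_cons_self v S)
  have hker : Module.finrank K (LinearMap.ker (φ.domRestrict W)) = 1 := by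
    rw [LinearMap.ker_domRestrict]
    refine (Submodule.submoduleOfEquivOfLe hker_le).finrank_eq.trans ?_
    rw [hφ, finrank_span_singleton hv]
  have hrange : LinearMap.range (φ.domRestrict W) = Submodule.span K {x | x ∈ S.map φ} := by
    have himage : {x | x ∈ S.map φ} = φ '' {x | x ∈ S} := by ext; simp
    rw [LinearMap.range_domRestrict, hW, Submodule.map_span, setOf_mem_cons,
      Set.image_insert_eq, hφv, Submodule.span_insert_zero, himage]
  have hdim := LinearMap.finrank_range_add_finrank_ker (φ.domRestrict W)
  rw [hrange, hker] at hdim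
  exact hdim.symm

theorem vectorRank_cons_of_notMem_span {v : M} {S : Multiset M}
    (hv : v ∉ Submodule.span K {x | x ∈ S}) : vectorRank K (v ::ₘ S) = vectorRank K S + 1 := by
  have := finite_span_multiset (K := K) S
  have hv₀ : v ≠ 0 := fun h => hv (h ▸ Submodule.zero_mem _)
  have hdisj := ((Submodule.disjoint_span_singleton' hv₀).2 hv).symm
  have hdim := Submodule.finrank_sup_add_finrank_inf_eq (Submodule.span K {v})
    (Submodule.span K {x | x ∈ S})
  rw [hdisj.eq_bot, finrank_bot, finrank_span_singleton hv₀, ← Submodule.span_union,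
    ← Set.insert_eq, ← setOf_mem_cons] at hdim
  rw [vectorRank, vectorRank, Set.finrank, Set.finrank]
  omega

theorem vectorNullity_cons_of_mem_span {v : M} {S : Multiset M}
    (hv : v ∈ Submodule.span K {x | x ∈ S}) :
    vectorNullity K (v ::ₘ S) = vectorNullity K S + 1 := by
  rw [vectorNullity, vectorNullity, vectorRank_cons_of_mem_span hv, Multiset.card_cons,
    Nat.sub_add_comm (vectorRank_le_card S)]

theorem vectorNullity_cons_of_notMem_span {v : M} {S : Multiset M}
    (hv : v ∉ Submodule.span K {x | x ∈ S}) :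
    vectorNullity K (v ::ₘ S) = vectorNullity K S := by
  rw [vectorNullity, vectorNullity, vectorRank_cons_of_notMem_span hv, Multiset.card_cons,
    Nat.add_sub_add_right]

theorem vectorNullity_cons_eq_vectorNullity_map {φ : M →ₗ[K] N} {v : M}
    (hφ : LinearMap.ker φ = Submodule.span K {v}) (hv : v ≠ 0) (S : Multiset M) :
    vectorNullity K (v ::ₘ S) = vectorNullity K (S.map φ) := by
  rw [vectorNullity, vectorNullity, vectorRank_cons_eq_vectorRank_map hφ hv, Multiset.card_cons,
    Multiset.card_map, Nat.add_sub_add_right]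

theorem vectorFlowPoly_zero : vectorFlowPoly K (0 : Multiset M) = 1 := by
  simp [vectorFlowPoly, vectorNullity, ← two_mul]

theorem vectorFlowPoly_zero_cons (S : Multiset M) :
    vectorFlowPoly K (0 ::ₘ S) = (X + 1) * vectorFlowPoly K S := by
  have hspan (Z : Multiset M) : (0 : M) ∈ Submodule.span K {x | x ∈ Z} := Submodule.zero_mem _
  simp only [vectorFlowPoly, Multiset.powerset_cons, Multiset.map_add, Multiset.sum_add,
    Multiset.map_map, Function.comp_def, vectorRank_cons_of_mem_span (hspan _),
    vectorNullity_cons_of_mem_span (hspan _), ← Multiset.sum_map_add, ← Multiset.sum_map_mul_left]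
  congr! 2
  ring

theorem vectorFlowPoly_cons_of_notMem_span {v : M} {S : Multiset M}
    (hv : v ∉ Submodule.span K {x | x ∈ S}) : vectorFlowPoly K (v ::ₘ S) = 0 := by
  rw [vectorFlowPoly, Multiset.powerset_cons, Multiset.map_add, Multiset.sum_add,
    Multiset.map_map, ← Multiset.sum_map_add]
  refine Multiset.sum_eq_zero fun p hp => ?_
  obtain ⟨Z, hZ, rfl⟩ := Multiset.mem_map.1 hp
  have hvZ : v ∉ Submodule.span K {x | x ∈ Z} := fun h =>
    hv (Submodule.span_mono (fun x hx => Multiset.mem_of_le (Multiset.mem_powerset.1 hZ) hx) h)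
  rw [Function.comp_apply, vectorRank_cons_of_notMem_span hvZ,
    vectorNullity_cons_of_notMem_span hvZ]
  ring

theorem vectorFlowPoly_cons_of_mem_span {φ : M →ₗ[K] N} {v : M} {S : Multiset M}
    (hφ : LinearMap.ker φ = Submodule.span K {v}) (hv₀ : v ≠ 0)
    (hv : v ∈ Submodule.span K {x | x ∈ S}) :
    vectorFlowPoly K (v ::ₘ S) = vectorFlowPoly K S + vectorFlowPoly K (S.map φ) := by
  rw [vectorFlowPoly, Multiset.powerset_cons, Multiset.map_add, Multiset.sum_add,
    vectorRank_cons_of_mem_span hv, ← vectorFlowPoly, ← vectorRank_cons_of_mem_span hv]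
  simp only [vectorFlowPoly, powerset_multiset_map, Multiset.map_map, Function.comp_def,
    vectorRank_cons_eq_vectorRank_map hφ hv₀, vectorNullity_cons_eq_vectorNullity_map hφ hv₀]
  congr! 4
  ring

theorem vectorFlowPoly_nonneg (S : Multiset M) : 0 ≤ vectorFlowPoly K S := by
  induction hn : Multiset.card S generalizing M with
  | zero =>
    rw [Multiset.card_eq_zero.1 hn, vectorFlowPoly_zero]
    exact zero_le_one
  | succ n ih =>
    obtain ⟨v, S, rfl⟩ := Multiset.card_pos_iff_exists_mem.1 (by omega : 0 < S.card) |>.imp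
      fun v hv => (Multiset.exists_cons_of_mem hv)
    rw [Multiset.card_cons, Nat.add_right_cancel_iff] at hn
    by_cases hv₀ : v = 0
    · rw [hv₀, vectorFlowPoly_zero_cons]
      exact mul_nonneg (add_nonneg coeffwise_X_nonneg zero_le_one) (ih S hn)
    by_cases hv : v ∈ Submodule.span K {x | x ∈ S}
    · rw [vectorFlowPoly_cons_of_mem_span (Submodule.ker_mkQ (Submodule.span K {v})) hv₀ hv]
      exact add_nonneg (ih S hn) (ih _ (by rw [Multiset.card_map, hn]))
    · rw [vectorFlowPoly_cons_of_notMem_span hv]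

end VectorFlow

theorem ker_lmapDomain_le {K α β : Type*} [Ring K] {f : α → β} {W : Submodule K (α →₀ K)}
    (hW : ∀ a b, f a = f b → Finsupp.single a 1 - Finsupp.single b 1 ∈ W) :
    LinearMap.ker (Finsupp.lmapDomain K K f) ≤ W := by
  intro x hx
  rcases isEmpty_or_nonempty α with hα | hα
  · exact Subsingleton.elim 0 x ▸ W.zero_mem
  let rep := Function.invFun f
  have hrep (y : α →₀ K) : y - (y.mapDomain f).mapDomain rep ∈ W := by
    induction y using Finsupp.induction_linear with
    | zero => simp
    | add y z hy hz =>
      rw [Finsupp.mapDomain_add, Finsupp.mapDomain_add, add_sub_add_comm]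
      exact W.add_mem hy hz
    | single a c =>
      have hfa : f a = f (rep (f a)) := (Function.invFun_eq ⟨a, rfl⟩).symm
      simpa [smul_sub] using W.smul_mem c (hW a (rep (f a)) hfa)
  have hx₀ : x.mapDomain f = 0 := hx
  simpa [hx₀] using hrep x

section Multigraph

variable {α : Type*}

/-- The column of an edge in the incidence matrix over the field with two elements, which needs no
orientation; a loop has the zero column. -/
noncomputable def incidenceVector : Sym2 α → α →₀ ZMod 2 :=
  Sym2.lift ⟨fun a b => Finsupp.single a 1 + Finsupp.single b 1, fun _ _ => add_comm _ _⟩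

theorem incidenceVector_mk (a b : α) :
    incidenceVector s(a, b) = Finsupp.single a 1 + Finsupp.single b 1 :=
  rfl

theorem incidenceVector_loop (a : α) : incidenceVector s(a, a) = 0 :=
  ZModModule.add_self _

theorem incidenceVector_ne_zero {a b : α} (hab : a ≠ b) : incidenceVector s(a, b) ≠ 0 := fun h => by
  simpa [incidenceVector_mk, hab] using DFunLike.congr_fun h a

theorem incidenceVector_apply_of_notMem {x : α} {e : Sym2 α} (hx : x ∉ e) :
    incidenceVector e x = 0 := by
  induction e with
  | h a b =>
    rw [Sym2.mem_iff, not_or] at hx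
    simp [incidenceVector_mk, hx.1, hx.2]

theorem incidenceVector_map {β : Type*} (f : α → β) (e : Sym2 α) :
    incidenceVector (e.map f) = Finsupp.lmapDomain (ZMod 2) (ZMod 2) f (incidenceVector e) := by
  induction e with
  | h a b => simp [incidenceVector_mk, Finsupp.mapDomain_add]

/-- The cycle rank of the multigraph with the given edges, loops and parallel edges allowed. -/
noncomputable def cycleRank (E : Multiset (Sym2 α)) : ℕ :=
  vectorNullity (ZMod 2) (E.map incidenceVector)

/-- The flow polynomial of the multigraph with the given edges, with signs removed as in
`vectorFlowPoly`. -/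
noncomputable def multigraphFlowPoly (E : Multiset (Sym2 α)) : ℤ[X] :=
  vectorFlowPoly (ZMod 2) (E.map incidenceVector)

theorem cycleRank_zero : cycleRank (0 : Multiset (Sym2 α)) = 0 := by
  simp [cycleRank, vectorNullity]

theorem multigraphFlowPoly_zero : multigraphFlowPoly (0 : Multiset (Sym2 α)) = 1 :=
  vectorFlowPoly_zero

theorem cycleRank_loop_cons (a : α) (E : Multiset (Sym2 α)) :
    cycleRank (s(a, a) ::ₘ E) = cycleRank E + 1 := by
  rw [cycleRank, Multiset.map_cons, incidenceVector_loop,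
    vectorNullity_cons_of_mem_span (Submodule.zero_mem _), ← cycleRank]

theorem multigraphFlowPoly_loop_cons (a : α) (E : Multiset (Sym2 α)) :
    multigraphFlowPoly (s(a, a) ::ₘ E) = (X + 1) * multigraphFlowPoly E := by
  rw [multigraphFlowPoly, Multiset.map_cons, incidenceVector_loop, vectorFlowPoly_zero_cons,
    ← multigraphFlowPoly]

/-- The ends of the edges of a multigraph, each vertex listed as often as its degree says. -/
def edgeEnds (E : Multiset (Sym2 α)) : Multiset α :=
  E.bind Sym2.toMultiset

theorem edgeEnds_cons (a b : α) (E : Multiset (Sym2 α)) :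
    edgeEnds (s(a, b) ::ₘ E) = a ::ₘ b ::ₘ edgeEnds E := by
  have hpair : s(a, b).toMultiset = a ::ₘ b ::ₘ 0 := rfl
  rw [edgeEnds, Multiset.cons_bind, hpair, Multiset.cons_add, Multiset.cons_add, zero_add, edgeEnds]

theorem mem_edgeEnds {E : Multiset (Sym2 α)} {x : α} : x ∈ edgeEnds E ↔ ∃ e ∈ E, x ∈ e := by
  simp only [edgeEnds, Multiset.mem_bind, Sym2.mem_toMultiset]

theorem edgeEnds_map {β : Type*} (f : α → β) (E : Multiset (Sym2 α)) :
    edgeEnds (E.map (Sym2.map f)) = (edgeEnds E).map f := by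
  rw [edgeEnds, edgeEnds, Multiset.bind_map, Multiset.map_bind]
  refine Multiset.bind_congr fun e _ => ?_
  induction e with
  | h a b => rfl

theorem card_edgeEnds (E : Multiset (Sym2 α)) :
    Multiset.card (edgeEnds E) = 2 * Multiset.card E := by
  simp [edgeEnds, Multiset.card_bind, Sym2.card_toMultiset, mul_comm]

variable [DecidableEq α]

/-- The multigraph obtained by merging the vertex `v` into `w`; an edge between them becomes a
loop. -/
def mergeVertex (v w : α) (E : Multiset (Sym2 α)) : Multiset (Sym2 α) :=
  E.map (Sym2.map (Function.update id v w))

/-- The degree of a vertex in a multigraph, in which a loop counts twice. -/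
def multigraphDegree (E : Multiset (Sym2 α)) (x : α) : ℕ :=
  (edgeEnds E).count x

theorem mergeVertex_cons (v w : α) (E : Multiset (Sym2 α)) :
    mergeVertex v w (s(v, w) ::ₘ E) = s(w, w) ::ₘ mergeVertex v w E := by
  rcases eq_or_ne v w with rfl | hvw
  · simp [mergeVertex]
  · simp [mergeVertex, hvw.symm]

theorem ker_lmapDomain_update {v w : α} :
    LinearMap.ker (Finsupp.lmapDomain (ZMod 2) (ZMod 2) (Function.update id v w)) =
      Submodule.span (ZMod 2) {incidenceVector s(v, w)} := by
  refine le_antisymm (ker_lmapDomain_le fun a b hab => ?_) ?_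
  · rw [ZModModule.sub_eq_add, ← incidenceVector_mk]
    have hcases : a = b ∨ s(a, b) = s(v, w) := by
      simp only [Function.update_apply, id] at hab
      grind [Sym2.eq_iff]
    rcases hcases with rfl | hab
    · exact incidenceVector_loop a ▸ Submodule.zero_mem _
    · exact hab ▸ Submodule.mem_span_singleton_self _
  · rw [Submodule.span_singleton_le_iff_mem, LinearMap.mem_ker, ← incidenceVector_map]
    rcases eq_or_ne v w with rfl | hvw
    · simp [incidenceVector_loop]
    · simp [incidenceVector_loop, hvw.symm]

theorem map_incidenceVector_mergeVertex (v w : α) (E : Multiset (Sym2 α)) :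
    (mergeVertex v w E).map incidenceVector = (E.map incidenceVector).map
      (Finsupp.lmapDomain (ZMod 2) (ZMod 2) (Function.update id v w)) := by
  simp only [mergeVertex, Multiset.map_map, Function.comp_def, incidenceVector_map]

theorem cycleRank_cons_eq_cycleRank_mergeVertex {v w : α} (hvw : v ≠ w) (E : Multiset (Sym2 α)) :
    cycleRank (s(v, w) ::ₘ E) = cycleRank (mergeVertex v w E) := by
  rw [cycleRank, cycleRank, Multiset.map_cons, map_incidenceVector_mergeVertex]
  exact vectorNullity_cons_eq_vectorNullity_map ker_lmapDomain_update
    (incidenceVector_ne_zero hvw) _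

theorem multigraphFlowPoly_cons_eq_zero_or {v w : α} (hvw : v ≠ w) (E : Multiset (Sym2 α)) :
    multigraphFlowPoly (s(v, w) ::ₘ E) = 0 ∨
      cycleRank (s(v, w) ::ₘ E) = cycleRank E + 1 ∧
        multigraphFlowPoly (s(v, w) ::ₘ E) =
          multigraphFlowPoly E + multigraphFlowPoly (mergeVertex v w E) := by
  simp only [multigraphFlowPoly, cycleRank, Multiset.map_cons, map_incidenceVector_mergeVertex]
  by_cases h : incidenceVector s(v, w) ∈
      Submodule.span (ZMod 2) {x | x ∈ E.map incidenceVector}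
  · exact .inr ⟨vectorNullity_cons_of_mem_span h,
      vectorFlowPoly_cons_of_mem_span ker_lmapDomain_update (incidenceVector_ne_zero hvw) h⟩
  · exact .inl (vectorFlowPoly_cons_of_notMem_span h)

theorem multigraphDegree_cons (a b : α) (E : Multiset (Sym2 α)) (x : α) :
    multigraphDegree (s(a, b) ::ₘ E) x =
      multigraphDegree E x + (if x = b then 1 else 0) + (if x = a then 1 else 0) := by
  rw [multigraphDegree, edgeEnds_cons, Multiset.count_cons, Multiset.count_cons, multigraphDegree]

theorem count_map_update_right {v w : α} (hvw : v ≠ w) (s : Multiset α) :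
    (s.map (Function.update id v w)).count w = s.count v + s.count w := by
  induction s using Multiset.induction_on with
  | empty => simp
  | cons a s ih =>
    rw [Multiset.map_cons, Multiset.count_cons, ih, Multiset.count_cons, Multiset.count_cons,
      Function.update_apply]
    grind

theorem count_map_update_of_ne {v w x : α} (hxv : x ≠ v) (hxw : x ≠ w) (s : Multiset α) :
    (s.map (Function.update id v w)).count x = s.count x := by
  induction s using Multiset.induction_on with
  | empty => simp
  | cons a s ih =>
    rw [Multiset.map_cons, Multiset.count_cons, ih, Multiset.count_cons, Function.update_apply]
    grind

theorem multigraphDegree_mergeVertex_right {v w : α} (hvw : v ≠ w) (E : Multiset (Sym2 α)) :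
    multigraphDegree (mergeVertex v w E) w = multigraphDegree E v + multigraphDegree E w := by
  rw [multigraphDegree, mergeVertex, edgeEnds_map, count_map_update_right hvw]
  rfl

theorem multigraphDegree_mergeVertex_of_ne {v w x : α} (hxv : x ≠ v) (hxw : x ≠ w)
    (E : Multiset (Sym2 α)) :
    multigraphDegree (mergeVertex v w E) x = multigraphDegree E x := by
  rw [multigraphDegree, mergeVertex, edgeEnds_map, count_map_update_of_ne hxv hxw]
  rfl

theorem exists_eq_cons_of_multigraphDegree_pos {E : Multiset (Sym2 α)} {x : α}
    (hx : 0 < multigraphDegree E x) : ∃ w S, E = s(x, w) ::ₘ S := by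
  obtain ⟨e, he, hxe⟩ := mem_edgeEnds.1 (Multiset.count_pos.1 hx)
  obtain ⟨w, rfl⟩ := Sym2.mem_iff_exists.1 hxe
  exact ⟨w, Multiset.exists_cons_of_mem he⟩

theorem multigraphFlowPoly_eq_zero_of_multigraphDegree_eq_one {E : Multiset (Sym2 α)} {v : α}
    (hv : multigraphDegree E v = 1) : multigraphFlowPoly E = 0 := by
  obtain ⟨w, S, rfl⟩ := exists_eq_cons_of_multigraphDegree_pos (hv ▸ one_pos)
  have hvw : v ≠ w := by
    rintro rfl
    simp [multigraphDegree_cons] at hv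
  rw [multigraphDegree_cons, if_pos rfl, if_neg hvw, add_zero, Nat.add_eq_right] at hv
  rw [multigraphFlowPoly, Multiset.map_cons]
  refine vectorFlowPoly_cons_of_notMem_span fun hmem => ?_
  have hspan : Submodule.span (ZMod 2) {x | x ∈ S.map incidenceVector} ≤
      LinearMap.ker (Finsupp.lapply v) := by
    rw [Submodule.span_le]
    intro x hx
    obtain ⟨e, he, rfl⟩ := Multiset.mem_map.1 hx
    exact incidenceVector_apply_of_notMem fun hve =>
      Multiset.count_eq_zero.1 hv (mem_edgeEnds.2 ⟨e, he, hve⟩)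
  simpa [incidenceVector_mk, hvw] using hspan hmem

theorem vectorRank_incidenceVector_le (E : Multiset (Sym2 α)) (U : α) :
    vectorRank (ZMod 2) (E.map incidenceVector) ≤ ((edgeEnds E).toFinset.erase U).card := by
  set W := Submodule.span (ZMod 2)
    ((((edgeEnds E).toFinset.erase U).image fun x => incidenceVector s(x, U) : Finset _) :
      Set (α →₀ ZMod 2)) with hW
  have hstar {x : α} (hx : x ∈ edgeEnds E) : incidenceVector s(x, U) ∈ W := by
    rcases eq_or_ne x U with rfl | hxU
    · exact incidenceVector_loop x ▸ W.zero_mem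
    · exact Submodule.subset_span (Finset.mem_image_of_mem _ (by simpa using ⟨hxU, hx⟩))
  have hspan : Submodule.span (ZMod 2) {v | v ∈ E.map incidenceVector} ≤ W := by
    rw [Submodule.span_le]
    intro v hv
    obtain ⟨e, he, rfl⟩ := Multiset.mem_map.1 hv
    induction e with
    | h a b =>
      have hsum : incidenceVector s(a, b) = incidenceVector s(a, U) + incidenceVector s(b, U) := by
        simp only [incidenceVector_mk]
        rw [add_add_add_comm, ZModModule.add_self, add_zero]
      rw [hsum]
      exact W.add_mem (hstar (mem_edgeEnds.2 ⟨_, he, Sym2.mem_mk_left a b⟩))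
        (hstar (mem_edgeEnds.2 ⟨_, he, Sym2.mem_mk_right a b⟩))
  exact (Submodule.finrank_mono hspan).trans
    ((finrank_span_finset_le_card _).trans Finset.card_image_le)

theorem multigraphDegree_add_card_le_two_mul_cycleRank {E : Multiset (Sym2 α)} {U : α}
    (hdeg : ∀ x ∈ edgeEnds E, 3 ≤ multigraphDegree E x) (hU : U ∈ edgeEnds E) :
    multigraphDegree E U + ((edgeEnds E).toFinset.erase U).card ≤ 2 * cycleRank E := by
  have hsum : multigraphDegree E U + ∑ x ∈ (edgeEnds E).toFinset.erase U, multigraphDegree E x =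
      2 * Multiset.card E := by
    rw [Finset.add_sum_erase _ _ (Multiset.mem_toFinset.2 hU), ← card_edgeEnds]
    exact Multiset.toFinset_sum_count_eq _
  have hthree : ((edgeEnds E).toFinset.erase U).card * 3 ≤
      ∑ x ∈ (edgeEnds E).toFinset.erase U, multigraphDegree E x :=
    Finset.card_nsmul_le_sum _ _ _ fun x hx =>
      hdeg x (Multiset.mem_toFinset.1 (Finset.mem_of_mem_erase hx))
  have hrank := vectorRank_incidenceVector_le E U
  rw [cycleRank, vectorNullity, Multiset.card_map]
  omega

theorem multigraphDegree_eq_card_filter {E : Multiset (Sym2 α)} (hloop : ∀ a, s(a, a) ∉ E)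
    (x : α) : multigraphDegree E x = Multiset.card (E.filter (x ∈ ·)) := by
  induction E using Multiset.induction_on with
  | empty => rfl
  | cons e E ih =>
    induction e with
    | h a b =>
      have hab : a ≠ b := by rintro rfl; exact hloop a (Multiset.mem_cons_self _ _)
      rw [multigraphDegree_cons, ih fun c hc => hloop c (Multiset.mem_cons_of_mem hc),
        Multiset.filter_cons, Multiset.card_add]
      split_ifs <;> simp_all [add_comm]

theorem multigraphDegree_le_card {E : Multiset (Sym2 α)} {U : α} (hloop : ∀ a, s(a, a) ∉ E)
    (hsimple : ∀ w, E.count s(U, w) ≤ 1) :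
    multigraphDegree E U ≤ ((edgeEnds E).toFinset.erase U).card := by
  have hnodup : (E.filter (U ∈ ·)).Nodup := by
    refine Multiset.nodup_iff_count_le_one.2 fun e => ?_
    rw [Multiset.count_filter]
    split_ifs with he
    · obtain ⟨w, rfl⟩ := Sym2.mem_iff_exists.1 he
      exact hsimple w
    · exact zero_le_one
  have himage : (E.filter (U ∈ ·)).toFinset ⊆
      ((edgeEnds E).toFinset.erase U).image fun w => s(U, w) := by
    intro e he
    obtain ⟨heE, hUe⟩ := Multiset.mem_filter.1 (Multiset.mem_toFinset.1 he)
    obtain ⟨w, rfl⟩ := Sym2.mem_iff_exists.1 hUe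
    refine Finset.mem_image_of_mem _ (Finset.mem_erase.2 ⟨?_, ?_⟩)
    · rintro rfl
      exact hloop w heE
    · exact Multiset.mem_toFinset.2 (mem_edgeEnds.2 ⟨_, heE, Sym2.mem_mk_right U w⟩)
  calc multigraphDegree E U = (E.filter (U ∈ ·)).toFinset.card := by
        rw [multigraphDegree_eq_card_filter hloop, Multiset.toFinset_card_of_nodup hnodup]
    _ ≤ ((edgeEnds E).toFinset.erase U).card :=
        (Finset.card_le_card himage).trans Finset.card_image_le

/-- The statement, proved for all multigraphs by deletion–contraction, that `rootedBound` bounds the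
flow polynomial whichever vertex is taken as root. -/
def IsRootedBounded (E : Multiset (Sym2 α)) : Prop :=
  ∀ U, multigraphFlowPoly E ≤ rootedBound X (cycleRank E) (multigraphDegree E U)

namespace IsRootedBounded

theorem of_multigraphFlowPoly_eq_zero {E : Multiset (Sym2 α)} (hE : multigraphFlowPoly E = 0) :
    IsRootedBounded E := fun _ =>
  hE.trans_le (rootedBound_nonneg coeffwise_X_nonneg _ _)

theorem of_mem_edgeEnds {E : Multiset (Sym2 α)} (hE : ∀ U ∈ edgeEnds E,
      multigraphFlowPoly E ≤ rootedBound X (cycleRank E) (multigraphDegree E U)) :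
    IsRootedBounded E := by
  intro U
  by_cases hU : U ∈ edgeEnds E
  · exact hE U hU
  rcases (edgeEnds E).empty_or_exists_mem with hempty | ⟨x, hx⟩
  · have hcard := card_edgeEnds E
    rw [hempty, Multiset.card_zero, zero_eq_mul, or_iff_right two_ne_zero,
      Multiset.card_eq_zero] at hcard
    rw [hcard, multigraphFlowPoly_zero, cycleRank_zero, rootedBound]
  · have hUx : multigraphDegree E U ≤ multigraphDegree E x := by
      rw [multigraphDegree, Multiset.count_eq_zero.2 hU]
      exact Nat.zero_le _
    exact (hE x hx).trans (rootedBound_antitone coeffwise_X_nonneg _ hUx)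

theorem loop_cons {E : Multiset (Sym2 α)} (hE : IsRootedBounded E) (a : α) :
    IsRootedBounded (s(a, a) ::ₘ E) := by
  intro U
  rw [multigraphFlowPoly_loop_cons, cycleRank_loop_cons]
  calc (X + 1) * multigraphFlowPoly E
      ≤ (X + 1) * rootedBound X (cycleRank E) (multigraphDegree E U) :=
        mul_le_mul_of_nonneg_left (hE U) (add_nonneg coeffwise_X_nonneg zero_le_one)
    _ ≤ rootedBound X (cycleRank E + 1) (multigraphDegree (s(a, a) ::ₘ E) U) := by
        refine add_one_mul_rootedBound_le coeffwise_X_nonneg _ ?_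
        rw [multigraphDegree_cons]
        split_ifs <;> omega

theorem of_mergeVertex {E : Multiset (Sym2 α)} {v w : α} (hvw : v ≠ w)
    (hv : multigraphDegree E v = 1) (hE : IsRootedBounded (mergeVertex v w E)) :
    IsRootedBounded (s(v, w) ::ₘ E) := by
  rcases multigraphFlowPoly_cons_eq_zero_or hvw E with hzero | ⟨-, hflow⟩
  · exact of_multigraphFlowPoly_eq_zero hzero
  intro U
  rw [hflow, multigraphFlowPoly_eq_zero_of_multigraphDegree_eq_one hv, zero_add,
    cycleRank_cons_eq_cycleRank_mergeVertex hvw, multigraphDegree_cons]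
  rcases eq_or_ne U v with rfl | hUv
  · rw [hv, if_pos rfl, if_neg hvw, rootedBound_of_le_three _ (by omega)]
    exact (hE w).trans (rootedBound_antitone coeffwise_X_nonneg _ (Nat.zero_le _))
  refine (hE U).trans (rootedBound_antitone coeffwise_X_nonneg _ ?_)
  rw [if_neg hUv]
  rcases eq_or_ne U w with rfl | hUw
  · rw [multigraphDegree_mergeVertex_right hvw, if_pos rfl]
    omega
  · rw [multigraphDegree_mergeVertex_of_ne hUv hUw, if_neg hUw, add_zero, add_zero]

theorem multigraphFlowPoly_cons_le {E : Multiset (Sym2 α)} {w U : α} (hwU : w ≠ U)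
    (hw : 3 ≤ multigraphDegree (s(w, U) ::ₘ E) w) (hU : 3 ≤ multigraphDegree (s(w, U) ::ₘ E) U)
    (hrank : multigraphDegree (s(w, U) ::ₘ E) U ≤ cycleRank (s(w, U) ::ₘ E))
    (hdel : IsRootedBounded E) (hcon : IsRootedBounded (mergeVertex w U E)) :
    multigraphFlowPoly (s(w, U) ::ₘ E) ≤
      rootedBound X (cycleRank (s(w, U) ::ₘ E)) (multigraphDegree (s(w, U) ::ₘ E) U) := by
  rcases multigraphFlowPoly_cons_eq_zero_or hwU E with hzero | ⟨hcycle, hflow⟩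
  · exact of_multigraphFlowPoly_eq_zero hzero U
  have hdegw := multigraphDegree_cons w U E w
  have hdegU := multigraphDegree_cons w U E U
  have hmerge := multigraphDegree_mergeVertex_right hwU E
  rw [if_pos rfl, if_neg hwU] at hdegw
  rw [if_pos rfl, if_neg hwU.symm] at hdegU
  rw [hflow, hcycle]
  have hcon := hcon U
  rw [← cycleRank_cons_eq_cycleRank_mergeVertex hwU, hcycle] at hcon
  exact (add_le_add (hdel U) hcon).trans
    (rootedBound_add_rootedBound_le coeffwise_X_nonneg hU (hcycle ▸ hrank) (by omega) (by omega))

theorem multigraphFlowPoly_cons_cons_le {E : Multiset (Sym2 α)} {w U : α} (hwU : w ≠ U)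
    (hw : 3 ≤ multigraphDegree (s(w, U) ::ₘ s(w, U) ::ₘ E) w)
    (hrank : 2 ≤ cycleRank (s(w, U) ::ₘ s(w, U) ::ₘ E))
    (hdel : IsRootedBounded (s(w, U) ::ₘ E)) (hcon : IsRootedBounded (mergeVertex w U E)) :
    multigraphFlowPoly (s(w, U) ::ₘ s(w, U) ::ₘ E) ≤
      rootedBound X (cycleRank (s(w, U) ::ₘ s(w, U) ::ₘ E))
        (multigraphDegree (s(w, U) ::ₘ s(w, U) ::ₘ E) U) := by
  rcases multigraphFlowPoly_cons_eq_zero_or hwU (s(w, U) ::ₘ E) with hzero | ⟨hcycle, hflow⟩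
  · exact of_multigraphFlowPoly_eq_zero hzero U
  obtain ⟨g, hg⟩ := Nat.exists_eq_add_of_le' (show 1 ≤ cycleRank (s(w, U) ::ₘ E) by omega)
  have hdel := hdel U
  have hcon := hcon U
  rw [← cycleRank_cons_eq_cycleRank_mergeVertex hwU, hg,
    multigraphDegree_mergeVertex_right hwU] at hcon
  rw [hg] at hdel
  rw [hflow, hcycle, hg, mergeVertex_cons, multigraphFlowPoly_loop_cons]
  simp only [multigraphDegree_cons, if_pos, if_neg hwU, if_neg hwU.symm, add_zero] at hw hdel ⊢
  set D := multigraphDegree E U + 1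
  have hcon := hcon.trans (rootedBound_antitone coeffwise_X_nonneg (g + 1)
    (show D ≤ multigraphDegree E w + multigraphDegree E U by omega))
  calc _ ≤ rootedBound X (g + 1) D + (X + 1) * rootedBound X (g + 1) D :=
        add_le_add hdel (mul_le_mul_of_nonneg_left hcon (add_nonneg coeffwise_X_nonneg zero_le_one))
    _ = (X + 2) * rootedBound X (g + 1) D := by ring
    _ ≤ rootedBound X (g + 2) (D + 1) := add_two_mul_rootedBound_le coeffwise_X_nonneg g le_rfl

end IsRootedBounded

open IsRootedBounded

theorem multigraphFlowPoly_le_of_three_le_degree {E : Multiset (Sym2 α)} {U : α}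
    (hloop : ∀ a, s(a, a) ∉ E) (hdeg : ∀ x ∈ edgeEnds E, 3 ≤ multigraphDegree E x)
    (hU : U ∈ edgeEnds E)
    (ih : ∀ S : Multiset (Sym2 α), Multiset.card S < Multiset.card E → IsRootedBounded S) :
    multigraphFlowPoly E ≤ rootedBound X (cycleRank E) (multigraphDegree E U) := by
  have hcount := multigraphDegree_add_card_le_two_mul_cycleRank hdeg hU
  have hdegU := hdeg U hU
  have ends {w} (hw : s(w, U) ∈ E) : w ≠ U ∧ 3 ≤ multigraphDegree E w :=
    ⟨by rintro rfl; exact hloop w hw, hdeg w (mem_edgeEnds.2 ⟨_, hw, Sym2.mem_mk_left w U⟩)⟩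
  by_cases hparallel : ∃ w, 2 ≤ E.count s(w, U)
  · obtain ⟨w, hw⟩ := hparallel
    have he : s(w, U) ∈ E := Multiset.count_pos.1 (by omega)
    obtain ⟨hwU, hdegw⟩ := ends he
    obtain ⟨S, rfl⟩ := Multiset.exists_cons_of_mem he
    rw [Multiset.count_cons_self] at hw
    have hagain : s(w, U) ∈ S := Multiset.count_pos.1 (by omega)
    obtain ⟨T, rfl⟩ := Multiset.exists_cons_of_mem hagain
    exact multigraphFlowPoly_cons_cons_le hwU hdegw (by omega) (ih _ (by simp))
      (ih _ (by simp [mergeVertex]))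
  · push Not at hparallel
    have hsimple := multigraphDegree_le_card hloop fun w =>
      Nat.lt_succ_iff.1 (Sym2.eq_swap ▸ hparallel w)
    obtain ⟨e, he, hUe⟩ := mem_edgeEnds.1 hU
    obtain ⟨w, rfl⟩ := Sym2.mem_iff_exists.1 hUe
    rw [Sym2.eq_swap] at he
    obtain ⟨hwU, hdegw⟩ := ends he
    obtain ⟨S, rfl⟩ := Multiset.exists_cons_of_mem he
    exact multigraphFlowPoly_cons_le hwU hdegw hdegU (by omega) (ih _ (by simp))
      (ih _ (by simp [mergeVertex]))

theorem isRootedBounded (E : Multiset (Sym2 α)) : IsRootedBounded E := by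
  induction hn : Multiset.card E using Nat.strong_induction_on generalizing E with
  | h n ih =>
  subst hn
  by_cases hloop : ∃ a, s(a, a) ∈ E
  · obtain ⟨a, ha⟩ := hloop
    obtain ⟨S, rfl⟩ := Multiset.exists_cons_of_mem ha
    exact (ih _ (by simp) S rfl).loop_cons a
  by_cases hone : ∃ v, multigraphDegree E v = 1
  · obtain ⟨v, hv⟩ := hone
    exact of_multigraphFlowPoly_eq_zero (multigraphFlowPoly_eq_zero_of_multigraphDegree_eq_one hv)
  by_cases htwo : ∃ v, multigraphDegree E v = 2
  · obtain ⟨v, hv⟩ := htwo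
    obtain ⟨w, S, rfl⟩ := exists_eq_cons_of_multigraphDegree_pos (hv ▸ two_pos)
    have hvw : v ≠ w := by
      rintro rfl
      exact hloop ⟨v, Multiset.mem_cons_self _ _⟩
    rw [multigraphDegree_cons, if_pos rfl, if_neg hvw] at hv
    exact of_mergeVertex hvw (by omega) (ih _ (by simp [mergeVertex]) _ rfl)
  push Not at hloop hone htwo
  have hdeg : ∀ x ∈ edgeEnds E, 3 ≤ multigraphDegree E x := fun x hx => by
    have hpos : 0 < multigraphDegree E x := Multiset.count_pos.2 hx
    have := hone x
    have := htwo x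
    omega
  exact of_mem_edgeEnds fun U hU =>
    multigraphFlowPoly_le_of_three_le_degree hloop hdeg hU fun S hS => ih _ hS S rfl

omit [DecidableEq α] in
theorem multigraphFlowPoly_le_rootedBound_zero (E : Multiset (Sym2 α)) :
    multigraphFlowPoly E ≤ rootedBound X (cycleRank E) 0 := by
  classical
  rcases isEmpty_or_nonempty α with hα | ⟨⟨U⟩⟩
  · rw [Subsingleton.elim E 0, multigraphFlowPoly_zero, cycleRank_zero, rootedBound]
  · exact (isRootedBounded E U).trans (rootedBound_antitone coeffwise_X_nonneg _ (Nat.zero_le _))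

end Multigraph

section SimpleGraphFlow

theorem sum_powerset_val {α M : Type*} [AddCommMonoid M] (s : Finset α) (f : Multiset α → M) :
    ∑ t ∈ s.powerset, f t.val = (s.val.powerset.map f).sum := by
  simp [Finset.sum, Finset.powerset, Multiset.map_pmap, Multiset.pmap_eq_map]

theorem ker_lmapDomain_connectedComponentMk {V : Type*} (Z : Multiset (Sym2 V)) :
    LinearMap.ker (Finsupp.lmapDomain (ZMod 2) (ZMod 2)
        (SimpleGraph.fromEdgeSet {e | e ∈ Z}).connectedComponentMk) =
      Submodule.span (ZMod 2) {v | v ∈ Z.map incidenceVector} := by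
  set H := SimpleGraph.fromEdgeSet {e | e ∈ Z}
  refine le_antisymm (ker_lmapDomain_le fun a b hab => ?_) (Submodule.span_le.2 fun v hv => ?_)
  · obtain ⟨p⟩ := SimpleGraph.ConnectedComponent.exact hab
    induction p with
    | nil => rw [sub_self]; exact Submodule.zero_mem _
    | @cons a b c hadj p ih =>
      rw [← sub_add_sub_cancel _ (Finsupp.single b 1), ZModModule.sub_eq_add,
        ← incidenceVector_mk]
      refine Submodule.add_mem _ (Submodule.subset_span ?_)
        (ih (SimpleGraph.ConnectedComponent.sound p.reachable))
      exact Multiset.mem_map_of_mem _ ((SimpleGraph.fromEdgeSet_adj _).1 hadj).1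
  · obtain ⟨e, he, rfl⟩ := Multiset.mem_map.1 hv
    induction e with
    | h a b =>
      have hab : H.connectedComponentMk a = H.connectedComponentMk b := by
        rcases eq_or_ne a b with rfl | hne
        · rfl
        · exact SimpleGraph.ConnectedComponent.connectedComponentMk_eq_of_adj
            ((SimpleGraph.fromEdgeSet_adj _).2 ⟨he, hne⟩)
      rw [SetLike.mem_coe, LinearMap.mem_ker, ← incidenceVector_map, Sym2.map_mk, hab,
        incidenceVector_loop]

theorem vectorRank_incidenceVector_add_card_connectedComponent {V : Type*} [Fintype V]
    (Z : Multiset (Sym2 V)) :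
    vectorRank (ZMod 2) (Z.map incidenceVector) +
      Nat.card (SimpleGraph.fromEdgeSet {e | e ∈ Z}).ConnectedComponent = Fintype.card V := by
  set H := SimpleGraph.fromEdgeSet {e | e ∈ Z}
  set L := Finsupp.lmapDomain (ZMod 2) (ZMod 2) H.connectedComponentMk
  have hsurj : Function.Surjective L :=
    Finsupp.mapDomain_surjective Quot.mk_surjective
  have := Fintype.ofFinite H.ConnectedComponent
  have hdim := LinearMap.finrank_range_add_finrank_ker L
  rw [LinearMap.range_eq_top.2 hsurj, finrank_top, ker_lmapDomain_connectedComponentMk,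
    Module.finrank_finsupp_self, Module.finrank_finsupp_self, ← Nat.card_eq_fintype_card,
    add_comm] at hdim
  exact hdim

theorem flowPoly_eq_neg_one_pow_mul_comp_neg_X {V : Type} [Fintype V] (G : SimpleGraph V) :
    flowPoly G = (-1) ^ cycleRank G.edgeSet.toFinite.toFinset.val *
      (multigraphFlowPoly G.edgeSet.toFinite.toFinset.val).comp (-X) := by
  rw [flowPoly]
  set E := G.edgeSet.toFinite.toFinset
  rw [multigraphFlowPoly, vectorFlowPoly, powerset_multiset_map, Multiset.map_map,
    ← sum_powerset_val E, sum_comp, Finset.mul_sum]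
  refine Finset.sum_congr rfl fun Z hZ => ?_
  have hrankE := vectorRank_le_card (K := ZMod 2) (E.val.map incidenceVector)
  have hrankZ := vectorRank_le_card (K := ZMod 2) (Z.val.map incidenceVector)
  have hcomponents : vectorRank (ZMod 2) (Z.val.map incidenceVector) +
      Nat.card (SimpleGraph.fromEdgeSet (Z : Set (Sym2 V))).ConnectedComponent = Fintype.card V :=
    vectorRank_incidenceVector_add_card_connectedComponent Z.val
  have hcard := Finset.card_le_card (Finset.mem_powerset.1 hZ)
  rw [Multiset.card_map, Finset.card_val] at hrankE hrankZ
  simp only [Function.comp_apply, mul_comp, pow_comp, neg_comp, one_comp, X_comp, cycleRank,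
    vectorNullity, Multiset.card_map, Finset.card_val]
  set rE := vectorRank (ZMod 2) (E.val.map incidenceVector)
  set rZ := vectorRank (ZMod 2) (Z.val.map incidenceVector)
  have hsign : (-1 : ℤ[X]) ^ (E.card - rE) * (-1) ^ (rE + rZ) * (-1) ^ (Z.card - rZ) =
      (-1) ^ (E.card - Z.card) := by
    rw [← pow_add, ← pow_add, show E.card - rE + (rE + rZ) + (Z.card - rZ) =
      E.card - Z.card + 2 * Z.card by omega, pow_add, pow_mul, neg_one_sq, one_pow, mul_one]
  have hexp : Z.card + Nat.card (SimpleGraph.fromEdgeSet (Z : Set (Sym2 V))).ConnectedComponent -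
      Fintype.card V = Z.card - rZ := by
    omega
  rw [hexp, neg_pow (X : ℤ[X]), zsmul_eq_mul]
  push_cast
  rw [← hsign]
  ring

theorem abs_coeff_flowPoly {V : Type} [Fintype V] (G : SimpleGraph V) (i : ℕ) :
    |(flowPoly G).coeff i| = (multigraphFlowPoly G.edgeSet.toFinite.toFinset.val).coeff i := by
  have hnonneg := vectorFlowPoly_nonneg (K := ZMod 2)
    (G.edgeSet.toFinite.toFinset.val.map incidenceVector) i
  have hneg : (-X : ℤ[X]) = C (-1) * X := by simp
  rw [flowPoly_eq_neg_one_pow_mul_comp_neg_X, hneg]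
  rcases neg_one_pow_eq_or ℤ[X] (cycleRank G.edgeSet.toFinite.toFinset.val) with h | h <;>
    simp only [h, one_mul, neg_one_mul, coeff_neg, abs_neg, comp_C_mul_X_coeff, abs_mul, abs_pow,
      abs_one, one_pow, mul_one] <;>
    exact abs_of_nonneg hnonneg

end SimpleGraphFlow

theorem stmt_0_general {V : Type} [Fintype V] (G : SimpleGraph V) (g : ℕ)
    (hg : edgeCount G + Nat.card G.ConnectedComponent ≤ Fintype.card V + g) (i : ℕ) :
    |(flowPoly G).coeff i| ≤ (flowBound (X : ℤ[X]) g).coeff i := by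
  have hrank := vectorRank_incidenceVector_add_card_connectedComponent
    G.edgeSet.toFinite.toFinset.val
  have hG : SimpleGraph.fromEdgeSet {e | e ∈ G.edgeSet.toFinite.toFinset.val} = G := by
    simp
  rw [hG] at hrank
  have hcycle : cycleRank G.edgeSet.toFinite.toFinset.val ≤ g := by
    rw [cycleRank, vectorNullity, Multiset.card_map, Finset.card_val, ← edgeCount]
    omega
  have hbound : multigraphFlowPoly G.edgeSet.toFinite.toFinset.val ≤ flowBound X g :=
    (multigraphFlowPoly_le_rootedBound_zero _).trans <|
      (rootedBound_zero_monotone coeffwise_X_nonneg hcycle).trans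
        (rootedBound_zero_le_flowBound coeffwise_X_nonneg g)
  rw [abs_coeff_flowPoly]
  exact hbound i

/-- Dong–Koh type upper bound on the coefficients of the flow polynomial, improved. -/
theorem stmt_0 {V : Type} [Fintype V] (G : SimpleGraph V)
    (hconn : G.Connected) (hbridgeless : ∀ e : Sym2 V, ¬ G.IsBridge e)
    (n m : ℕ) (hn : n = Fintype.card V) (hm : m = edgeCount G)
    (d : Polynomial ℤ)
    (hd : d = if m ≤ n + 3 then ∏ j ∈ Finset.Icc 1 (m - n + 1), (X + C (j : ℤ))
              else (X + 1) * (X + 2) * (X + 3) ^ 2 * (X + 4) ^ (m - n - 3)) :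
    ∀ i ≤ m - n + 1, |(flowPoly G).coeff i| ≤ d.coeff i := by
  intro i _
  have hcomponents : Nat.card G.ConnectedComponent = 1 := by
    have := hconn.preconnected.subsingleton_connectedComponent
    have := hconn.nonempty.map G.connectedComponentMk
    exact Nat.card_unique
  have hd' : d = flowBound X (m - n + 1) := by
    rw [hd, flowBound]
    simp only [show m ≤ n + 3 ↔ m - n + 1 ≤ 4 by omega, show m - n + 1 - 4 = m - n - 3 by omega,
      map_natCast]
  exact hd' ▸ stmt_0_general G (m - n + 1) (by omega) i
end

section
/- Let G be a connected bridgeless finite simple cubic graph with n vertices and m edges (so n is even and n ≥ 4). Then τ(G,t) = (−1)^{m−n+1} F(G,−t) is a polynomial of degree n/2 + 1, and every coefficient of τ(G,t) is at most the corresponding coefficient of: (t+1)(t+2)(t+3) if n = 4; (t+1)(t+2)(t+3)(t+4) if n = 6; and (t+1)(t+2)(t+3)^2(t+4)^{(n−6)/2} if n ≥ 8. -/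
open Polynomial

/-- `τ(G,t) = (−1)^{m−n+1} F(G,−t)`. -/
noncomputable def tauPoly {V : Type} [Fintype V] (G : SimpleGraph V) : Polynomial ℤ :=
  (-1 : Polynomial ℤ) ^ (edgeCount G - Fintype.card V + 1) * (flowPoly G).comp (-X)

/-!
Write `f(E) = Σ_{Z ⊆ E} (-1)^|Z| t^{nullity Z}` for the flow polynomial up to sign. Then `f(E) = 0`
if `E` has a bridge, adjoining a loop multiplies `f` by `1 - t`, and any other edge obeys
deletion–contraction.

Single out a vertex `w` of a connected cubic graph, the hub, and apply deletion–contraction to an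
edge joining `w` to a vertex `x`. Contracting it raises the degree of the hub by one. Deleting it
lowers that degree by one and leaves `x` with degree two, and such a vertex can be suppressed at the
cost of a sign. In both cases the other vertices stay cubic and one of them disappears, so the
absolute values of the coefficients of `f` are bounded by a two-parameter recursion in the number of
other vertices and the degree of the hub. Two more vertices multiply its solution by at most
`t + 4`.

If no edge of `E` is a bridge, then every proper subset of `E` has smaller nullity, so the term
`Z = E` alone has top degree.
-/

theorem reachable_sup_edge {V : Type*} (G : SimpleGraph V) (u v : V) :
    (G ⊔ SimpleGraph.edge u v).Reachable u v := by
  rcases eq_or_ne u v with rfl | hne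
  · exact .rfl
  · exact SimpleGraph.Adj.reachable (.inr (by simp [SimpleGraph.edge_adj, hne]))

theorem reachable_sup_edge_iff {V : Type*} {G : SimpleGraph V} {u v a b : V} :
    (G ⊔ SimpleGraph.edge u v).Reachable a b ↔
      G.Reachable a b ∨ (G.Reachable a u ∧ G.Reachable v b) ∨
        (G.Reachable a v ∧ G.Reachable u b) := by
  constructor
  · rintro ⟨p⟩
    induction p with
    | nil => exact .inl .rfl
    | cons hac _ ih =>
      rcases hac with hac | hac
      · have htrans := fun d => hac.reachable.trans (w := d)
        grind
      · have hrefl := fun d => SimpleGraph.Reachable.refl (G := G) d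
        grind
  · have hle : G ≤ G ⊔ SimpleGraph.edge u v := le_sup_left
    have huv := reachable_sup_edge G u v
    rintro (h | ⟨h, h'⟩ | ⟨h, h'⟩)
    exacts [h.mono hle, (h.mono hle).trans (huv.trans (h'.mono hle)),
      (h.mono hle).trans (huv.symm.trans (h'.mono hle))]

theorem reachable_sup_edge_of_reachable {V : Type*} {G : SimpleGraph V} {u v : V}
    (h : G.Reachable u v) : (G ⊔ SimpleGraph.edge u v).Reachable = G.Reachable := by
  ext a b
  rw [reachable_sup_edge_iff]
  refine ⟨?_, .inl⟩
  rintro (hab | ⟨ha, hb⟩ | ⟨ha, hb⟩)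
  exacts [hab, ha.trans (h.trans hb), ha.trans (h.symm.trans hb)]

theorem card_connectedComponent_sup_edge_of_reachable {V : Type*} {G : SimpleGraph V} {u v : V}
    (h : G.Reachable u v) :
    Nat.card (G ⊔ SimpleGraph.edge u v).ConnectedComponent = Nat.card G.ConnectedComponent := by
  rw [SimpleGraph.ConnectedComponent, SimpleGraph.ConnectedComponent,
    reachable_sup_edge_of_reachable h]

theorem card_connectedComponent_sup_edge_of_not_reachable {V : Type*} [Finite V]
    {G : SimpleGraph V} {u v : V} (h : ¬G.Reachable u v) :
    Nat.card (G ⊔ SimpleGraph.edge u v).ConnectedComponent + 1 =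
      Nat.card G.ConnectedComponent := by
  classical
  let f : {c : G.ConnectedComponent // c ≠ G.connectedComponentMk v} →
      (G ⊔ SimpleGraph.edge u v).ConnectedComponent :=
    fun c => c.1.map (.ofLE le_sup_left)
  have hf : f.Bijective := by
    constructor
    · rintro ⟨⟨a⟩, ha⟩ ⟨⟨b⟩, hb⟩ hab
      rcases reachable_sup_edge_iff.1 (SimpleGraph.ConnectedComponent.exact hab) with
        h | ⟨-, h⟩ | ⟨h, -⟩
      · exact Subtype.ext (SimpleGraph.ConnectedComponent.sound h)
      · exact absurd (SimpleGraph.ConnectedComponent.sound h.symm) hb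
      · exact absurd (SimpleGraph.ConnectedComponent.sound h) ha
    · rintro ⟨a⟩
      by_cases ha : G.Reachable a v
      · refine ⟨⟨G.connectedComponentMk u, fun huv => h (SimpleGraph.ConnectedComponent.exact huv)⟩,
          SimpleGraph.ConnectedComponent.sound ?_⟩
        exact (reachable_sup_edge G u v).trans (ha.symm.mono le_sup_left)
      · exact ⟨⟨G.connectedComponentMk a, fun hav => ha (SimpleGraph.ConnectedComponent.exact hav)⟩,
          rfl⟩
  rw [← Nat.card_congr (Equiv.optionSubtypeNe (G.connectedComponentMk v)), Finite.card_option,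
    Nat.card_congr (Equiv.ofBijective f hf)]

theorem count_toMultiset_mk {V : Type*} [DecidableEq V] (a b v : V) :
    s(a, b).toMultiset.count v = (if v = a then 1 else 0) + if v = b then 1 else 0 := by
  change (a ::ₘ b ::ₘ 0 : Multiset V).count v = _
  rw [Multiset.count_cons, Multiset.count_cons, Multiset.count_zero, zero_add, add_comm]

/-- A multigraph on `V` with edges indexed by `ε`; loops and parallel edges are allowed. -/
structure Multigraph (V ε : Type*) where
  /-- The pair of end vertices of an edge. -/
  ends : ε → Sym2 V

namespace Multigraph

section Connectivity

variable {V ε : Type*} (M : Multigraph V ε) (Z : Set ε)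

/-- The simple graph on all of `V` underlying the edge set `Z`; it has the connected components of
the spanning subgraph `(V, Z)`, forgetting loops and multiplicities. -/
def spanning : SimpleGraph V :=
  SimpleGraph.fromEdgeSet (M.ends '' Z)

variable {M Z}

theorem spanning_adj {a b : V} :
    (M.spanning Z).Adj a b ↔ (∃ e ∈ Z, M.ends e = s(a, b)) ∧ a ≠ b := by
  simp [spanning]

theorem reachable_of_ends {e : ε} {a b : V} (he : e ∈ Z) (hab : M.ends e = s(a, b)) :
    (M.spanning Z).Reachable a b := by
  rcases eq_or_ne a b with rfl | hne
  · exact .rfl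
  · exact (spanning_adj.2 ⟨⟨e, he, hab⟩, hne⟩).reachable

theorem spanning_mono {Z' : Set ε} (h : Z ⊆ Z') : M.spanning Z ≤ M.spanning Z' :=
  SimpleGraph.fromEdgeSet_mono (Set.image_mono h)

theorem spanning_empty : M.spanning ∅ = ⊥ := by simp [spanning]

theorem spanning_insert {e : ε} {u v : V} (he : M.ends e = s(u, v)) :
    M.spanning (insert e Z) = M.spanning Z ⊔ SimpleGraph.edge u v := by
  rw [spanning, spanning, SimpleGraph.edge, ← SimpleGraph.fromEdgeSet_union, Set.image_insert_eq,
    he, Set.union_singleton]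

theorem reachable_map {W : Type*} {H : SimpleGraph W} (f : V → W)
    (hf : ∀ e ∈ Z, ∀ u v, M.ends e = s(u, v) → H.Reachable (f u) (f v)) {a b : V}
    (hab : (M.spanning Z).Reachable a b) : H.Reachable (f a) (f b) := by
  rw [SimpleGraph.reachable_iff_reflTransGen] at hab ⊢
  refine hab.lift' f fun u v huv => ?_
  obtain ⟨⟨e, he, hends⟩, -⟩ := spanning_adj.1 huv
  exact (SimpleGraph.reachable_iff_reflTransGen ..).1 (hf e he u v hends)

end Connectivity

section Contraction

variable {V ε : Type*} [DecidableEq V] (M : Multigraph V ε)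

/-- Identification of `x` with `w`. The vertex type stays the same, so `x` remains as an isolated
vertex. This is the contraction of an edge with ends `w` and `x` once that edge is removed. -/
def contract (x w : V) : Multigraph V ε where
  ends e := (M.ends e).map (Function.update id x w)

variable {M}

theorem reachable_contract_iff {x w a b : V} {Z : Set ε} :
    ((M.contract x w).spanning Z).Reachable (Function.update id x w a) (Function.update id x w b) ↔
      (M.spanning Z ⊔ SimpleGraph.edge w x).Reachable a b := by
  set p := Function.update id x w with hp
  have hle : M.spanning Z ≤ M.spanning Z ⊔ SimpleGraph.edge w x := le_sup_left
  have hproj (c : V) : (M.spanning Z ⊔ SimpleGraph.edge w x).Reachable (p c) c := by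
    rcases eq_or_ne c x with rfl | hc
    · simpa [hp] using reachable_sup_edge (M.spanning Z) w c
    · simp [hp, hc]
  have hdown {c d : V} (h : (M.spanning Z).Reachable c d) :
      ((M.contract x w).spanning Z).Reachable (p c) (p d) :=
    reachable_map p (fun e he u v huv => reachable_of_ends he (by simp [contract, huv, hp])) h
  have hwx : p w = p x := by
    rcases eq_or_ne w x with rfl | h
    · rfl
    · simp [hp, h]
  constructor
  · intro h
    refine (hproj a).symm.trans (.trans ?_ (hproj b))
    refine reachable_map id (fun e he u v huv => ?_) h
    induction hends : M.ends e with | _ c d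
    simp only [contract, hends, Sym2.map_mk, Sym2.eq_iff] at huv
    have hcd := (reachable_of_ends he hends).mono hle
    have key : (M.spanning Z ⊔ SimpleGraph.edge w x).Reachable (p c) (p d) :=
      (hproj c).trans (hcd.trans (hproj d).symm)
    obtain ⟨rfl, rfl⟩ | ⟨rfl, rfl⟩ := huv
    exacts [key, key.symm]
  · rw [reachable_sup_edge_iff]
    rintro (h | ⟨h, h'⟩ | ⟨h, h'⟩)
    · exact hdown h
    · exact (hdown h).trans (hwx ▸ hdown h')
    · exact (hdown h).trans (hwx ▸ hdown h')

theorem reachable_contract_iff_of_ne {w x a b : V} {e : ε} {Z : Set ε}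
    (hends : M.ends e = s(w, x)) (ha : a ≠ x) (hb : b ≠ x) :
    ((M.contract x w).spanning Z).Reachable a b ↔ (M.spanning (insert e Z)).Reachable a b := by
  simpa only [Function.update_of_ne ha, Function.update_of_ne hb, id, ← spanning_insert hends]
    using reachable_contract_iff (M := M) (x := x) (w := w) (a := a) (b := b) (Z := Z)

end Contraction

section Nullity

variable {V ε : Type*} [Fintype V] (M : Multigraph V ε) (Z : Finset ε)

/-- The dimension `|Z| + c(Z) - |V|` of the cycle space of the edge set `Z`; by
`card_le_card_add_card_connectedComponent` the subtraction does not truncate. -/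
noncomputable def nullity : ℕ :=
  Z.card + Nat.card (M.spanning (Z : Set ε)).ConnectedComponent - Fintype.card V

theorem card_connectedComponent_spanning_empty :
    Nat.card (M.spanning ∅).ConnectedComponent = Fintype.card V := by
  rw [spanning_empty, ← Nat.card_eq_fintype_card]
  refine (Nat.card_congr (Equiv.ofBijective
    (SimpleGraph.connectedComponentMk _) ⟨fun a b hab => ?_, Quot.mk_surjective⟩)).symm
  exact SimpleGraph.reachable_bot.1 (SimpleGraph.ConnectedComponent.exact hab)

theorem card_le_card_add_card_connectedComponent :
    Fintype.card V ≤ Z.card + Nat.card (M.spanning (Z : Set ε)).ConnectedComponent := by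
  classical
  induction Z using Finset.induction_on with
  | empty =>
    rw [Finset.coe_empty, card_connectedComponent_spanning_empty, Finset.card_empty, zero_add]
  | insert e Z he ih =>
    induction hends : M.ends e with | _ u v
    rw [Finset.card_insert_of_notMem he, Finset.coe_insert, spanning_insert hends]
    by_cases h : (M.spanning (Z : Set ε)).Reachable u v
    · rw [card_connectedComponent_sup_edge_of_reachable h]
      omega
    · have := card_connectedComponent_sup_edge_of_not_reachable h
      omega

variable {M Z}

theorem nullity_empty : M.nullity ∅ = 0 := by
  rw [nullity, Finset.coe_empty, card_connectedComponent_spanning_empty, Finset.card_empty,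
    zero_add, Nat.sub_self]

theorem nullity_insert_of_reachable [DecidableEq ε] {e : ε} {u v : V} (he : e ∉ Z)
    (hends : M.ends e = s(u, v)) (h : (M.spanning (Z : Set ε)).Reachable u v) :
    M.nullity (insert e Z) = M.nullity Z + 1 := by
  have := M.card_le_card_add_card_connectedComponent Z
  rw [nullity, nullity, Finset.card_insert_of_notMem he, Finset.coe_insert, spanning_insert hends,
    card_connectedComponent_sup_edge_of_reachable h]
  omega

theorem nullity_insert_of_not_reachable [DecidableEq ε] {e : ε} {u v : V} (he : e ∉ Z)
    (hends : M.ends e = s(u, v)) (h : ¬(M.spanning (Z : Set ε)).Reachable u v) :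
    M.nullity (insert e Z) = M.nullity Z := by
  have := card_connectedComponent_sup_edge_of_not_reachable h
  rw [nullity, nullity, Finset.card_insert_of_notMem he, Finset.coe_insert, spanning_insert hends]
  omega

theorem nullity_mono : Monotone M.nullity := by
  classical
  refine Finset.monotone_iff_forall_le_insert.2 fun Z e he => ?_
  induction hends : M.ends e with | _ u v
  by_cases h : (M.spanning (Z : Set ε)).Reachable u v
  · exact (nullity_insert_of_reachable he hends h).symm ▸ Nat.le_succ _
  · exact (nullity_insert_of_not_reachable he hends h).ge

theorem nullity_contract [DecidableEq V] [DecidableEq ε] {e : ε} {w x : V} (he : e ∉ Z)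
    (hends : M.ends e = s(w, x)) (hwx : w ≠ x) :
    (M.contract x w).nullity Z = M.nullity (insert e Z) := by
  induction Z using Finset.induction_on with
  | empty =>
    rw [nullity_empty, nullity_insert_of_not_reachable he hends, nullity_empty]
    simpa [spanning_empty] using hwx
  | insert g Z hg ih =>
    obtain ⟨heg, heZ⟩ : e ≠ g ∧ e ∉ Z := by simpa using he
    have hgeZ : g ∉ insert e Z := by simp [hg, heg.symm]
    induction hgends : M.ends g with | _ u v
    have hgends' : (M.contract x w).ends g =
        s(Function.update id x w u, Function.update id x w v) := by
      simp [contract, hgends]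
    rw [Finset.insert_comm]
    have hiff := reachable_contract_iff (M := M) (x := x) (w := w) (a := u) (b := v) (Z := Z)
    rw [← spanning_insert hends, ← Finset.coe_insert] at hiff
    by_cases h : (M.spanning (insert e Z : Finset ε)).Reachable u v
    · rw [nullity_insert_of_reachable hg hgends' (hiff.2 h),
        nullity_insert_of_reachable hgeZ hgends h, ih heZ]
    · rw [nullity_insert_of_not_reachable hg hgends' (mt hiff.1 h),
        nullity_insert_of_not_reachable hgeZ hgends h, ih heZ]

end Nullity

section Flow

variable {V ε : Type*} [Fintype V] (M : Multigraph V ε) (E : Finset ε)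

/-- The flow polynomial of the edge set `E` without its sign `(-1) ^ #E`. -/
noncomputable def signedFlow : ℤ[X] :=
  ∑ Z ∈ E.powerset, (-1) ^ Z.card * X ^ M.nullity Z

variable {M E}

theorem signedFlow_empty : M.signedFlow ∅ = 1 := by
  simp [signedFlow, nullity_empty]

variable [DecidableEq ε]

theorem signedFlow_insert {e : ε} (he : e ∉ E) :
    M.signedFlow (insert e E) =
      M.signedFlow E - ∑ Z ∈ E.powerset, (-1) ^ Z.card * X ^ M.nullity (insert e Z) := by
  rw [signedFlow, signedFlow, Finset.sum_powerset_insert he, sub_eq_add_neg,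
    ← Finset.sum_neg_distrib]
  congr 1
  refine Finset.sum_congr rfl fun Z hZ => ?_
  rw [Finset.card_insert_of_notMem (Finset.notMem_mono (Finset.mem_powerset.1 hZ) he)]
  ring

theorem signedFlow_insert_of_loop {e : ε} {v : V} (he : e ∉ E) (hends : M.ends e = s(v, v)) :
    M.signedFlow (insert e E) = M.signedFlow E - M.signedFlow E * X := by
  rw [signedFlow_insert he, signedFlow, Finset.sum_mul]
  congr 1
  refine Finset.sum_congr rfl fun Z hZ => ?_
  rw [nullity_insert_of_reachable (Finset.notMem_mono (Finset.mem_powerset.1 hZ) he) hends .rfl]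
  ring

theorem signedFlow_insert_of_not_reachable {e : ε} {u v : V} (he : e ∉ E)
    (hends : M.ends e = s(u, v)) (h : ¬(M.spanning (E : Set ε)).Reachable u v) :
    M.signedFlow (insert e E) = 0 := by
  rw [signedFlow_insert he, signedFlow, sub_eq_zero]
  refine Finset.sum_congr rfl fun Z hZ => ?_
  have hZE := Finset.mem_powerset.1 hZ
  rw [nullity_insert_of_not_reachable (Finset.notMem_mono hZE he) hends
    fun hZ => h (hZ.mono (spanning_mono (by exact_mod_cast hZE)))]

theorem signedFlow_insert_of_ne [DecidableEq V] {e : ε} {w x : V} (he : e ∉ E)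
    (hends : M.ends e = s(w, x)) (hwx : w ≠ x) :
    M.signedFlow (insert e E) = M.signedFlow E - (M.contract x w).signedFlow E := by
  rw [signedFlow_insert he]
  congr 1
  refine Finset.sum_congr rfl fun Z hZ => ?_
  rw [nullity_contract (Finset.notMem_mono (Finset.mem_powerset.1 hZ) he) hends hwx]

theorem natDegree_signedFlow
    (hE : ∀ e ∈ E, ∀ u v, M.ends e = s(u, v) →
      (M.spanning (E.erase e : Set ε)).Reachable u v) :
    (M.signedFlow E).natDegree = M.nullity E := by
  have hlt : ∀ Z ∈ E.ssubsets, M.nullity Z < M.nullity E := by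
    intro Z hZ
    obtain ⟨e, heE, hle⟩ := Finset.ssubset_iff_exists_subset_erase.1 (Finset.mem_ssubsets.1 hZ)
    induction hends : M.ends e with | _ u v
    have hsucc := nullity_insert_of_reachable (Finset.notMem_erase e E) hends (hE e heE u v hends)
    rw [Finset.insert_erase heE] at hsucc
    exact hsucc ▸ Nat.lt_succ_of_le (nullity_mono hle)
  have hproper : (∑ Z ∈ E.ssubsets, (-1 : ℤ[X]) ^ Z.card * X ^ M.nullity Z) ∈
      degreeLT ℤ (M.nullity E) := by
    refine Submodule.sum_mem _ fun Z hZ => mem_degreeLT.2 ?_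
    rcases neg_one_pow_eq_or ℤ[X] Z.card with h | h <;> simpa [h] using hlt Z hZ
  have hsplit : M.signedFlow E = (-1) ^ E.card * X ^ M.nullity E +
      ∑ Z ∈ E.ssubsets, (-1) ^ Z.card * X ^ M.nullity Z :=
    (Finset.add_sum_erase _ _ (Finset.mem_powerset_self E)).symm
  have htop : ((-1 : ℤ[X]) ^ E.card * X ^ M.nullity E).degree = (M.nullity E : WithBot ℕ) := by
    rcases neg_one_pow_eq_or ℤ[X] E.card with h | h <;> simp [h]
  rw [hsplit]
  refine natDegree_eq_of_degree_eq_some ?_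
  rw [degree_add_eq_left_of_degree_lt (htop ▸ mem_degreeLT.1 hproper), htop]

end Flow

section Degree

variable {V ε : Type*} [DecidableEq V] (M : Multigraph V ε) (E : Finset ε)

/-- The number of ends of edges of `E` at `v`; a loop counts twice. -/
def degree (v : V) : ℕ :=
  ∑ e ∈ E, (M.ends e).toMultiset.count v

variable {M E}

theorem degree_eq_zero_iff {v : V} : M.degree E v = 0 ↔ ∀ e ∈ E, v ∉ M.ends e := by
  simp [degree, Finset.sum_eq_zero_iff]

theorem degree_insert [DecidableEq ε] {e : ε} {a b : V} (he : e ∉ E) (hends : M.ends e = s(a, b))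
    (v : V) :
    M.degree (insert e E) v =
      (if v = a then 1 else 0) + (if v = b then 1 else 0) + M.degree E v := by
  rw [degree, Finset.sum_insert he, hends, count_toMultiset_mk, degree]

theorem exists_ends_of_degree_ne_zero {v : V} (h : M.degree E v ≠ 0) :
    ∃ e ∈ E, ∃ x, M.ends e = s(v, x) := by
  simpa [degree_eq_zero_iff, Sym2.mem_iff_exists] using h

theorem eq_of_reachable_of_degree_eq_zero {v x : V} (h : M.degree E v = 0)
    (hvx : (M.spanning (E : Set ε)).Reachable v x) : v = x := by
  by_contra hne
  obtain ⟨y, hy⟩ := hvx.nonempty_neighborSet_left hne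
  obtain ⟨⟨e, he, hends⟩, -⟩ := spanning_adj.1 hy
  exact degree_eq_zero_iff.1 h e he (hends ▸ Sym2.mem_mk_left v y)

theorem degree_contract {w x : V} (hwx : w ≠ x) (v : V) :
    (M.contract x w).degree E v =
      if v = x then 0 else if v = w then M.degree E w + M.degree E x else M.degree E v := by
  have hcount (z : Sym2 V) : (z.map (Function.update id x w)).toMultiset.count v =
      if v = x then 0 else if v = w then z.toMultiset.count w + z.toMultiset.count x
        else z.toMultiset.count v := by
    induction z with | _ a b
    simp only [Sym2.map_mk, count_toMultiset_mk, Function.update_apply, id]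
    grind
  simp only [degree, contract, hcount]
  split_ifs
  exacts [Finset.sum_const_zero, Finset.sum_add_distrib, rfl]

variable [Fintype V]

theorem signedFlow_eq_zero_of_degree_eq_one {v : V} (h : M.degree E v = 1) :
    M.signedFlow E = 0 := by
  classical
  obtain ⟨e, he, x, hends⟩ := exists_ends_of_degree_ne_zero (h ▸ one_ne_zero)
  have hdeg := degree_insert (Finset.notMem_erase e E) hends v
  rw [Finset.insert_erase he, h, if_pos rfl] at hdeg
  have hvx : v ≠ x := by grind
  have hdeg_erase : M.degree (E.erase e) v = 0 := by grind
  rw [← Finset.insert_erase he, signedFlow_insert_of_not_reachable (Finset.notMem_erase e E) hends]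
  exact fun hreach => hvx (eq_of_reachable_of_degree_eq_zero hdeg_erase hreach)

theorem signedFlow_insert_of_degree_eq_two [DecidableEq ε] {e : ε} {w x : V} (he : e ∉ E)
    (hends : M.ends e = s(w, x)) (hwx : w ≠ x) (hx : M.degree (insert e E) x = 2) :
    M.signedFlow (insert e E) = -(M.contract x w).signedFlow E := by
  have hdeg : M.degree E x = 1 := by
    have := degree_insert he hends x
    grind
  rw [signedFlow_insert_of_ne he hends hwx, signedFlow_eq_zero_of_degree_eq_one hdeg, zero_sub]

end Degree

end Multigraph

section Coefficients

/-- The polynomials all of whose coefficients are nonnegative; `Q - P ∈ nonnegCoeff R` expresses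
that `P` is at most `Q` coefficient by coefficient. -/
def nonnegCoeff (R : Type*) [Semiring R] [PartialOrder R] [IsOrderedRing R] :
    Subsemiring R[X] where
  carrier := {P | ∀ i, 0 ≤ P.coeff i}
  zero_mem' _ := by simp
  one_mem' i := by rw [coeff_one]; split_ifs <;> simp
  add_mem' hP hQ i := by simpa using add_nonneg (hP i) (hQ i)
  mul_mem' hP hQ i := by
    rw [coeff_mul]
    exact Finset.sum_nonneg fun p _ => mul_nonneg (hP p.1) (hQ p.2)

theorem X_mem_nonnegCoeff (R : Type*) [Semiring R] [PartialOrder R] [IsOrderedRing R] :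
    X ∈ nonnegCoeff R := by
  intro i
  rw [coeff_X]
  split_ifs <;> simp

variable {R : Type*} [Ring R] [LinearOrder R] {P P' Q Q' : R[X]}

/-- `Q` is a majorant of `P`: the coefficients of `Q` dominate the absolute values of those
of `P`. -/
def Majorized (P Q : R[X]) : Prop :=
  ∀ i, |P.coeff i| ≤ Q.coeff i

namespace Majorized

theorem neg (h : Majorized P Q) : Majorized (-P) Q := fun i => by simpa using h i

variable [IsOrderedRing R]

theorem zero (hQ : Q ∈ nonnegCoeff R) : Majorized 0 Q := fun i => by simpa using hQ i

theorem one : Majorized (1 : R[X]) 1 := fun i => by rw [coeff_one]; split_ifs <;> simp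

theorem sub (h : Majorized P Q) (h' : Majorized P' Q') : Majorized (P - P') (Q + Q') := fun i => by
  simpa using (abs_sub _ _).trans (add_le_add (h i) (h' i))

theorem mul_X (h : Majorized P Q) : Majorized (P * X) (Q * X)
  | 0 => by simp
  | i + 1 => by simpa using h i

theorem mono (h : Majorized P Q) (hQ : Q' - Q ∈ nonnegCoeff R) : Majorized P Q' := fun i =>
  (h i).trans (sub_nonneg.1 (by simpa using hQ i))

end Majorized

end Coefficients

section HubBound

/-- The majorant of `signedFlow` for a connected multigraph having a hub of degree `d + 2` and `r`
further vertices, all of degree three. For `r = 0` it is attained by a bouquet of loops; otherwise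
the two summands come from deleting and contracting an edge at the hub. -/
noncomputable def hubBound : ℕ → ℕ → ℤ[X]
  | 0, d => (X + 1) ^ (d / 2 + 1)
  | r + 1, 0 => hubBound r 1
  | r + 1, d + 1 => hubBound r d + hubBound r (d + 2)

/-- The majorant of `tauPoly G` for a connected cubic graph `G` on `n` vertices. -/
noncomputable def cubicBound (n : ℕ) : ℤ[X] :=
  if n = 4 then (X + 1) * (X + 2) * (X + 3)
  else if n = 6 then (X + 1) * (X + 2) * (X + 3) * (X + 4)
  else (X + 1) * (X + 2) * (X + 3) ^ 2 * (X + 4) ^ ((n - 6) / 2)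

theorem X_add_one_mem_nonnegCoeff : X + 1 ∈ nonnegCoeff ℤ :=
  add_mem (X_mem_nonnegCoeff ℤ) (one_mem _)

theorem hubBound_mem_nonnegCoeff : ∀ r d, hubBound r d ∈ nonnegCoeff ℤ
  | 0, _ => pow_mem X_add_one_mem_nonnegCoeff _
  | r + 1, 0 => hubBound_mem_nonnegCoeff r 1
  | r + 1, d + 1 => add_mem (hubBound_mem_nonnegCoeff r d) (hubBound_mem_nonnegCoeff r (d + 2))

theorem hubBound_add_two_sub_mem_nonnegCoeff :
    ∀ r d, hubBound r (d + 2) - (X + 1) * hubBound r d ∈ nonnegCoeff ℤ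
  | 0, d => by
    have h : hubBound 0 (d + 2) - (X + 1) * hubBound 0 d = 0 := by
      simp only [hubBound, Nat.add_div_right d two_pos]
      ring
    exact h ▸ zero_mem _
  | r + 1, 0 => by
    convert add_mem (hubBound_add_two_sub_mem_nonnegCoeff r 1)
      (hubBound_mem_nonnegCoeff r 1) using 1
    simp only [hubBound]
    ring
  | r + 1, d + 1 => by
    convert add_mem (hubBound_add_two_sub_mem_nonnegCoeff r d)
      (hubBound_add_two_sub_mem_nonnegCoeff r (d + 2)) using 1
    simp only [hubBound]
    ring

theorem X_add_four_mul_hubBound_sub_mem_nonnegCoeff :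
    ∀ r d, (X + 4) * hubBound r d - hubBound (r + 2) d ∈ nonnegCoeff ℤ
  | 0, 0 => by
    convert mul_mem (ofNat_mem (nonnegCoeff ℤ) 2) X_add_one_mem_nonnegCoeff using 1
    simp only [hubBound]
    ring
  | 0, 1 => by
    convert X_add_one_mem_nonnegCoeff using 1
    simp only [hubBound]
    ring
  | 0, d + 2 => by
    convert mul_mem (pow_mem X_add_one_mem_nonnegCoeff (d / 2 + 1)) (X_mem_nonnegCoeff ℤ) using 1
    simp only [hubBound, Nat.add_div_right _ two_pos]
    ring
  | r + 1, 0 => X_add_four_mul_hubBound_sub_mem_nonnegCoeff r 1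
  | r + 1, d + 1 => by
    convert add_mem (X_add_four_mul_hubBound_sub_mem_nonnegCoeff r d)
      (X_add_four_mul_hubBound_sub_mem_nonnegCoeff r (d + 2)) using 1
    simp only [hubBound]
    ring

theorem hubBound_three_one : hubBound 3 1 = (X + 1) * (X + 2) * (X + 3) := by
  simp only [hubBound]
  ring

theorem hubBound_five_one : hubBound 5 1 = (X + 1) * (X + 2) * (X ^ 2 + 6 * X + 10) := by
  simp only [hubBound]
  ring

theorem hubBound_seven_one :
    hubBound 7 1 = (X + 1) * (X + 2) * (X ^ 3 + 9 * X ^ 2 + 29 * X + 35) := by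
  simp only [hubBound]
  ring

theorem mul_pow_sub_hubBound_mem_nonnegCoeff (j : ℕ) :
    (X + 1) * (X + 2) * (X + 3) ^ 2 * (X + 4) ^ (j + 1) - hubBound (7 + 2 * j) 1 ∈
      nonnegCoeff ℤ := by
  have hX := X_mem_nonnegCoeff ℤ
  induction j with
  | zero =>
    have h : (X + 1) * (X + 2) * (X ^ 2 + 4 * X + 1) ∈ nonnegCoeff ℤ := by
      apply_rules [mul_mem, add_mem, pow_mem, one_mem, ofNat_mem]
    convert h using 1
    rw [mul_zero, add_zero, hubBound_seven_one]
    ring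
  | succ j ih =>
    convert add_mem (mul_mem (add_mem hX (ofNat_mem _ 4)) ih)
      (X_add_four_mul_hubBound_sub_mem_nonnegCoeff (7 + 2 * j) 1) using 1
    ring_nf

theorem cubicBound_sub_hubBound_mem_nonnegCoeff {n : ℕ} (heven : Even n) (hn : 4 ≤ n) :
    cubicBound n - hubBound (n - 1) 1 ∈ nonnegCoeff ℤ := by
  have hX := X_mem_nonnegCoeff ℤ
  rw [cubicBound]
  split_ifs with h4 h6
  · rw [h4, hubBound_three_one, sub_self]
    exact zero_mem _
  · have h : (X + 1) * (X + 2) * (X + 2) ∈ nonnegCoeff ℤ := by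
      apply_rules [mul_mem, add_mem, one_mem, ofNat_mem]
    convert h using 1
    rw [h6, hubBound_five_one]
    ring
  · obtain ⟨j, rfl⟩ : ∃ j, n = 8 + 2 * j := ⟨n / 2 - 4, by grind⟩
    convert mul_pow_sub_hubBound_mem_nonnegCoeff j using 4 <;> omega

end HubBound

namespace Multigraph

section CubicHub

variable {V ε : Type*} [DecidableEq V]

/-- The edge set `E` forms a connected multigraph on `insert w S`, in which the hub `w` has
degree `d` and all vertices of `S` have degree three. -/
structure IsCubicHub (M : Multigraph V ε) (E : Finset ε) (w : V) (S : Finset V) (d : ℕ) :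
    Prop where
  hub_notMem : w ∉ S
  degree_eq (v : V) : M.degree E v = if v = w then d else if v ∈ S then 3 else 0
  reachable : ∀ v ∈ S, (M.spanning (E : Set ε)).Reachable w v

namespace IsCubicHub

variable {M : Multigraph V ε} {E : Finset ε} {w x : V} {S : Finset V} {d : ℕ} {e : ε}

theorem hub_ne (h : M.IsCubicHub E w S d) (hx : x ∈ S) : w ≠ x :=
  (ne_of_mem_of_not_mem hx h.hub_notMem).symm

theorem degree_hub (h : M.IsCubicHub E w S d) : M.degree E w = d := by
  rw [h.degree_eq, if_pos rfl]

theorem mem_of_ends (h : M.IsCubicHub E w S d) (he : e ∈ E) (hends : M.ends e = s(w, x))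
    (hwx : w ≠ x) : x ∈ S := by
  by_contra hx
  have hdeg : M.degree E x = 0 := by rw [h.degree_eq, if_neg hwx.symm, if_neg hx]
  exact degree_eq_zero_iff.1 hdeg e he (hends ▸ Sym2.mem_mk_right w x)

theorem eq_empty (h : M.IsCubicHub E w S 0) : S = ∅ ∧ E = ∅ := by
  have hS : S = ∅ := Finset.eq_empty_of_forall_notMem fun v hv => h.hub_notMem <|
    (eq_of_reachable_of_degree_eq_zero h.degree_hub (h.reachable v hv)).symm ▸ hv
  refine ⟨hS, Finset.eq_empty_of_forall_notMem fun e he => ?_⟩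
  induction hends : M.ends e with | _ a b
  have hdeg : M.degree E a = 0 := by simp [h.degree_eq, hS]
  exact degree_eq_zero_iff.1 hdeg e he (hends ▸ Sym2.mem_mk_left a b)

section Reduction

variable [DecidableEq ε]

theorem delete_loop (h : M.IsCubicHub (insert e E) w S (d + 2)) (he : e ∉ E)
    (hends : M.ends e = s(w, w)) : M.IsCubicHub E w S d where
  hub_notMem := h.hub_notMem
  degree_eq v := by
    have := h.degree_eq v
    rw [degree_insert he hends] at this
    grind
  reachable v hv := by
    have := h.reachable v hv
    rwa [Finset.coe_insert, spanning_insert hends, reachable_sup_edge_of_reachable .rfl] at this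

theorem contract (h : M.IsCubicHub (insert e E) w S (d + 2)) (he : e ∉ E)
    (hends : M.ends e = s(w, x)) (hx : x ∈ S) :
    (M.contract x w).IsCubicHub E w (S.erase x) (d + 3) where
  hub_notMem := Finset.notMem_mono (Finset.erase_subset x S) h.hub_notMem
  degree_eq v := by
    have hwx := h.hub_ne hx
    have hdeg v := (degree_insert he hends v).symm.trans (h.degree_eq v)
    have hdegw : M.degree E w = d + 1 := by grind
    have hdegx : M.degree E x = 2 := by grind
    simp only [degree_contract hwx, Finset.mem_erase]
    grind
  reachable v hv := by
    obtain ⟨hvx, hvS⟩ := Finset.mem_erase.1 hv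
    rw [reachable_contract_iff_of_ne hends (h.hub_ne hx) hvx, ← Finset.coe_insert]
    exact h.reachable v hvS

theorem suppress {g : ε} {y : V} (h : M.IsCubicHub (insert e E) w S (d + 1)) (he : e ∉ E)
    (hends : M.ends e = s(w, x)) (hx : x ∈ S) (hreach : (M.spanning (E : Set ε)).Reachable w x)
    (hg : g ∈ E) (hgends : M.ends g = s(y, x)) (hyx : y ≠ x) :
    (M.contract x y).IsCubicHub (E.erase g) w (S.erase x) d where
  hub_notMem := Finset.notMem_mono (Finset.erase_subset x S) h.hub_notMem
  degree_eq v := by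
    have hwx := h.hub_ne hx
    have hdeg v := (degree_insert he hends v).symm.trans (h.degree_eq v)
    have hdeg' v := degree_insert (Finset.notMem_erase g E) hgends v
    rw [Finset.insert_erase hg] at hdeg'
    have hdegx : M.degree (E.erase g) x = 1 := by grind
    have hdegy : M.degree (E.erase g) y + 1 = M.degree E y := by grind
    simp only [degree_contract hyx, Finset.mem_erase]
    grind
  reachable v hv := by
    obtain ⟨hvx, hvS⟩ := Finset.mem_erase.1 hv
    rw [reachable_contract_iff_of_ne hgends (h.hub_ne hx) hvx, ← Finset.coe_insert,
      Finset.insert_erase hg, ← reachable_sup_edge_of_reachable hreach, ← spanning_insert hends,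
      ← Finset.coe_insert]
    exact h.reachable v hvS

theorem exists_suppress [Fintype V] (h : M.IsCubicHub (insert e E) w S (d + 1)) (he : e ∉ E)
    (hends : M.ends e = s(w, x)) (hx : x ∈ S)
    (hreach : (M.spanning (E : Set ε)).Reachable w x) :
    ∃ (y : V) (g : ε), (M.contract x y).IsCubicHub (E.erase g) w (S.erase x) d ∧
      M.signedFlow E = -(M.contract x y).signedFlow (E.erase g) := by
  have hwx := h.hub_ne hx
  have hdeg : M.degree E x = 2 := by
    have := (degree_insert he hends x).symm.trans (h.degree_eq x)
    grind
  obtain ⟨y, hy⟩ := hreach.nonempty_neighborSet_right hwx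
  obtain ⟨⟨g, hg, hgends⟩, hxy⟩ := spanning_adj.1 hy
  rw [Sym2.eq_swap] at hgends
  refine ⟨y, g, h.suppress he hends hx hreach hg hgends hxy.symm, ?_⟩
  rw [← Finset.insert_erase hg] at hdeg
  rw [← signedFlow_insert_of_degree_eq_two (Finset.notMem_erase g E) hgends hxy.symm hdeg,
    Finset.insert_erase hg]

variable [Fintype V]

theorem majorized_of_loop (h : M.IsCubicHub (insert e E) w S (d + 2)) (he : e ∉ E)
    (hends : M.ends e = s(w, w))
    (ih : ∀ d', M.IsCubicHub E w S (d' + 2) → Majorized (M.signedFlow E) (hubBound S.card d')) :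
    Majorized (M.signedFlow (insert e E)) (hubBound S.card d) := by
  have hE := h.delete_loop he hends
  rw [signedFlow_insert_of_loop he hends]
  match d with
  | 0 =>
    obtain ⟨rfl, rfl⟩ := hE.eq_empty
    have hone : Majorized (1 - 1 * X : ℤ[X]) (1 + 1 * X) := Majorized.one.sub Majorized.one.mul_X
    simpa [signedFlow_empty, hubBound, add_comm] using hone
  | 1 =>
    rw [signedFlow_eq_zero_of_degree_eq_one hE.degree_hub, zero_mul, sub_zero]
    exact .zero (hubBound_mem_nonnegCoeff _ _)
  | d + 2 =>
    refine ((ih d hE).sub (ih d hE).mul_X).mono ?_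
    convert hubBound_add_two_sub_mem_nonnegCoeff S.card d using 1
    ring

theorem majorized_of_link (h : M.IsCubicHub (insert e E) w S (d + 2)) (he : e ∉ E)
    (hends : M.ends e = s(w, x)) (hwx : w ≠ x)
    (ih : ∀ (M' : Multigraph V ε) (E' : Finset ε) (S' : Finset V) (d' : ℕ), E' ⊆ E →
      M'.IsCubicHub E' w S' (d' + 2) → Majorized (M'.signedFlow E') (hubBound S'.card d')) :
    Majorized (M.signedFlow (insert e E)) (hubBound S.card d) := by
  by_cases hreach : (M.spanning (E : Set ε)).Reachable w x
  swap
  · rw [signedFlow_insert_of_not_reachable he hends hreach]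
    exact .zero (hubBound_mem_nonnegCoeff _ _)
  have hx := h.mem_of_ends (Finset.mem_insert_self e E) hends hwx
  have hcontract := ih _ E _ (d + 1) subset_rfl (h.contract he hends hx)
  rw [signedFlow_insert_of_ne he hends hwx, ← Finset.card_erase_add_one hx]
  match d with
  | 0 =>
    have hdeg : M.degree E w = 1 := by
      have := (degree_insert he hends w).symm.trans h.degree_hub
      grind
    rw [signedFlow_eq_zero_of_degree_eq_one hdeg, zero_sub]
    exact hcontract.neg
  | d + 1 =>
    obtain ⟨y, g, hsuppress, hflow⟩ := h.exists_suppress he hends hx hreach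
    rw [hflow]
    exact (ih _ _ _ d (Finset.erase_subset g E) hsuppress).neg.sub hcontract

end Reduction

theorem majorized_signedFlow [Fintype V] (h : M.IsCubicHub E w S (d + 2)) :
    Majorized (M.signedFlow E) (hubBound S.card d) := by
  classical
  induction hm : E.card using Nat.strong_induction_on generalizing M E S d with | _ m ih
  obtain ⟨e, he, x, hends⟩ :=
    exists_ends_of_degree_ne_zero (h.degree_hub.trans_ne (Nat.succ_ne_zero _))
  have hlt (E' : Finset ε) (hE' : E' ⊆ E.erase e) : E'.card < m :=
    hm ▸ (Finset.card_le_card hE').trans_lt (Finset.card_erase_lt_of_mem he)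
  rw [← Finset.insert_erase he] at h ⊢
  rcases eq_or_ne w x with rfl | hwx
  · exact h.majorized_of_loop (Finset.notMem_erase e E) hends
      fun d' h' => ih _ (hlt _ subset_rfl) h' rfl
  · exact h.majorized_of_link (Finset.notMem_erase e E) hends hwx
      fun M' E' S' d' hE' h' => ih _ (hlt E' hE') h' rfl

end IsCubicHub

end CubicHub

section Pairs

/-- All unordered pairs of vertices, as the edges of a multigraph. A simple graph is the part of it
carried by its edge set. -/
def pairs (V : Type*) : Multigraph V (Sym2 V) where
  ends := id

theorem spanning_pairs {V : Type*} (Z : Set (Sym2 V)) :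
    (pairs V).spanning Z = SimpleGraph.fromEdgeSet Z := by
  simp [spanning, pairs]

theorem degree_pairs {V : Type*} [Finite V] [DecidableEq V] (G : SimpleGraph V) (v : V) :
    (pairs V).degree G.edgeSet.toFinite.toFinset v = Nat.card (G.neighborSet v) := by
  classical
  have := Fintype.ofFinite V
  have hE : G.edgeSet.toFinite.toFinset = G.edgeFinset := by ext; simp
  rw [hE, Nat.card_eq_fintype_card, SimpleGraph.card_neighborSet_eq_degree,
    ← SimpleGraph.card_incidenceFinset_eq_degree, SimpleGraph.incidenceFinset_eq_filter,
    Finset.card_filter, degree]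
  refine Finset.sum_congr rfl fun e he => ?_
  induction e with | _ a b
  have hab : a ≠ b := (SimpleGraph.mem_edgeFinset.1 he : G.Adj a b).ne
  simp only [pairs, id, count_toMultiset_mk, Sym2.mem_iff]
  grind

theorem isCubicHub_pairs {V : Type*} [Fintype V] [DecidableEq V] {G : SimpleGraph V}
    (hconn : G.Connected) (hcubic : ∀ v : V, Nat.card (G.neighborSet v) = 3) (w : V) :
    (pairs V).IsCubicHub G.edgeSet.toFinite.toFinset w (Finset.univ.erase w) 3 where
  hub_notMem := Finset.notMem_erase w _
  degree_eq v := by rw [degree_pairs, hcubic]; grind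
  reachable v _ := by
    rw [Set.Finite.coe_toFinset, spanning_pairs, SimpleGraph.fromEdgeSet_edgeSet]
    exact hconn.preconnected w v

end Pairs

end Multigraph

section SimpleGraph

variable {V : Type} [Fintype V] (G : SimpleGraph V)

theorem flowPoly_eq_signedFlow :
    flowPoly G =
      (-1) ^ edgeCount G * (Multigraph.pairs V).signedFlow G.edgeSet.toFinite.toFinset := by
  rw [flowPoly, Multigraph.signedFlow, edgeCount, Finset.mul_sum]
  refine Finset.sum_congr rfl fun Z hZ => ?_
  have hsign : (-1 : ℤ) ^ (G.edgeSet.toFinite.toFinset.card - Z.card) =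
      (-1) ^ G.edgeSet.toFinite.toFinset.card * (-1) ^ Z.card := by
    rw [← pow_sub_mul_pow (-1) (Finset.card_le_card (Finset.mem_powerset.1 hZ)), mul_assoc,
      ← mul_pow, neg_one_mul, neg_neg, one_pow, mul_one]
  rw [Multigraph.nullity, Multigraph.spanning_pairs, hsign, zsmul_eq_mul]
  push_cast
  ring

theorem tauPoly_eq_or_eq_neg :
    tauPoly G = ((Multigraph.pairs V).signedFlow G.edgeSet.toFinite.toFinset).comp (-X) ∨
      tauPoly G = -((Multigraph.pairs V).signedFlow G.edgeSet.toFinite.toFinset).comp (-X) := by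
  rw [tauPoly, flowPoly_eq_signedFlow]
  rcases neg_one_pow_eq_or ℤ[X] (edgeCount G) with h | h <;>
    rcases neg_one_pow_eq_or ℤ[X] (edgeCount G - Fintype.card V + 1) with h' | h' <;>
    simp [h, h']

theorem abs_coeff_tauPoly (i : ℕ) :
    |(tauPoly G).coeff i| =
      |((Multigraph.pairs V).signedFlow G.edgeSet.toFinite.toFinset).coeff i| := by
  have hcomp (F : ℤ[X]) : (F.comp (-X)).coeff i = F.coeff i * (-1) ^ i := by
    rw [← comp_C_mul_X_coeff, C_neg, C_1, neg_one_mul]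
  rcases tauPoly_eq_or_eq_neg G with h | h <;> simp [h, hcomp, abs_mul]

variable {G}

theorem natDegree_tauPoly (hconn : G.Connected) (hbridgeless : ∀ e : Sym2 V, ¬ G.IsBridge e) :
    (tauPoly G).natDegree = edgeCount G + 1 - Fintype.card V := by
  have hcomp : (tauPoly G).natDegree =
      ((Multigraph.pairs V).signedFlow G.edgeSet.toFinite.toFinset).natDegree := by
    rcases tauPoly_eq_or_eq_neg G with h | h <;> simp [h, natDegree_comp]
  have hcard : Nat.card G.ConnectedComponent = 1 := by
    have := hconn.nonempty
    have := hconn.preconnected.subsingleton_connectedComponent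
    exact Nat.card_unique
  classical
  rw [hcomp, Multigraph.natDegree_signedFlow, Multigraph.nullity, Set.Finite.coe_toFinset,
    Multigraph.spanning_pairs, SimpleGraph.fromEdgeSet_edgeSet, hcard, edgeCount]
  intro e he u v hends
  obtain rfl : e = s(u, v) := hends
  have hreach := not_not.1 (SimpleGraph.isBridge_iff.not.1 (hbridgeless s(u, v)))
  rwa [Multigraph.spanning_pairs, Finset.coe_erase, Set.Finite.coe_toFinset,
    SimpleGraph.fromEdgeSet_sdiff, SimpleGraph.fromEdgeSet_edgeSet]

theorem two_mul_edgeCount (hcubic : ∀ v : V, Nat.card (G.neighborSet v) = 3) :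
    2 * edgeCount G = 3 * Fintype.card V := by
  classical
  have hE : G.edgeSet.toFinite.toFinset = G.edgeFinset := by ext; simp
  have hdegree (v : V) : G.degree v = 3 := by
    rw [← SimpleGraph.card_neighborSet_eq_degree, ← Nat.card_eq_fintype_card, hcubic]
  rw [edgeCount, hE, ← G.sum_degrees_eq_twice_card_edges, Finset.sum_congr rfl fun v _ => hdegree v,
    Finset.sum_const, Finset.card_univ, smul_eq_mul, mul_comm]

theorem card_neighborSet_lt_card (v : V) : Nat.card (G.neighborSet v) < Fintype.card V := by
  classical
  rw [Nat.card_eq_fintype_card, SimpleGraph.card_neighborSet_eq_degree]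
  exact G.degree_lt_card_verts v

theorem majorized_tauPoly (hconn : G.Connected)
    (hcubic : ∀ v : V, Nat.card (G.neighborSet v) = 3) :
    Majorized (tauPoly G) (cubicBound (Fintype.card V)) := by
  classical
  obtain ⟨w⟩ := hconn.nonempty
  have hcard : 4 ≤ Fintype.card V := (hcubic w).symm.trans_lt (card_neighborSet_lt_card w)
  have heven : Even (Fintype.card V) := by grind [two_mul_edgeCount hcubic]
  have hflow := (Multigraph.isCubicHub_pairs hconn hcubic w).majorized_signedFlow
  rw [Finset.card_erase_of_mem (Finset.mem_univ w), Finset.card_univ] at hflow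
  intro i
  rw [abs_coeff_tauPoly]
  exact hflow.mono (cubicBound_sub_hubBound_mem_nonnegCoeff heven hcard) i

end SimpleGraph

/-- For a connected bridgeless simple cubic graph, `τ(G,t)` has degree `n/2 + 1` and
its coefficients are bounded by those of the indicated products. -/
theorem stmt_2 {V : Type} [Fintype V] (G : SimpleGraph V)
    (hconn : G.Connected) (hbridgeless : ∀ e : Sym2 V, ¬ G.IsBridge e)
    (hcubic : ∀ v : V, Nat.card (G.neighborSet v) = 3)
    (n : ℕ) (hn : n = Fintype.card V)
    (U : Polynomial ℤ)
    (hU : U = if n = 4 then (X + 1) * (X + 2) * (X + 3)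
          else if n = 6 then (X + 1) * (X + 2) * (X + 3) * (X + 4)
          else (X + 1) * (X + 2) * (X + 3) ^ 2 * (X + 4) ^ ((n - 6) / 2)) :
    (tauPoly G).natDegree = n / 2 + 1 ∧ ∀ i : ℕ, (tauPoly G).coeff i ≤ U.coeff i := by
  subst hn hU
  constructor
  · have hedges := two_mul_edgeCount hcubic
    rw [natDegree_tauPoly hconn hbridgeless]
    omega
  · exact fun i => (le_abs_self _).trans (majorized_tauPoly hconn hcubic i)
end
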